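/- Let q be a prime power and m ≥ 0, and let Q := F_q[x,y]/(x^{q^m}, y^{q^m}) with its GL_2(F_q)-action. Then for each of the two compositions α = (2) and α = (1,1) of n = 2 (so that P_{(2)} = GL_2(F_q) and P_{(1,1)} is the Borel subgroup of upper-triangular matrices), the Hilbert series of the P_α-fixed subalgebra satisfies Hilb(Q^{P_α}, t) = C_{α,m}(t) as an identity in ℤ[[t]]. -/

import Mathlib

open Finset Matrix MvPolynomial PowerSeries

/-- Partial sums: `psum f i = f 0 + f 1 + ⋯ + f (i-1)`. -/
def psum (f : ℕ → ℕ) (i : ℕ) : ℕ := ∑ j ∈ Finset.range i, f j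

/-- The `(q,t)`-multinomial `[m; β, m−|β|]_{q,t}` as a power series in `ℚ[[t]]`. -/
noncomputable def qtMult (q m ℓ : ℕ) (β : ℕ → ℕ) : PowerSeries ℚ :=
  (∏ j ∈ Finset.range (psum β ℓ),
      (1 - (PowerSeries.X : PowerSeries ℚ) ^ (q ^ m - q ^ j))) *
    ∏ i ∈ Finset.range ℓ, ∏ j ∈ Finset.range (β i),
      (1 - (PowerSeries.X : PowerSeries ℚ) ^ (q ^ psum β (i + 1) - q ^ (psum β i + j)))⁻¹

/-- The exponent `e(m,α,β) = Σᵢ (αᵢ − βᵢ)(q^m − q^{Bᵢ})`. -/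
def eexp (q m ℓ : ℕ) (α β : ℕ → ℕ) : ℕ :=
  ∑ i ∈ Finset.range ℓ, (α i - β i) * (q ^ m - q ^ psum β (i + 1))

/-- Extend a tuple `β : Fin ℓ → ℕ` to a function `ℕ → ℕ` by zero. -/
def extfn (ℓ : ℕ) (β : Fin ℓ → ℕ) : ℕ → ℕ := fun i => if h : i < ℓ then β ⟨i, h⟩ else 0

/-- `C_{α,m}(t) = Σ_{β ≤ α, |β| ≤ m} t^{e(m,α,β)} [m; β, m−|β|]_{q,t}`. -/
noncomputable def Cser (q m ℓ : ℕ) (α : ℕ → ℕ) : PowerSeries ℚ :=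
  ∑ β ∈ (Finset.Icc (0 : Fin ℓ → ℕ) fun i => α i).filter fun β => ∑ i, β i ≤ m,
    (PowerSeries.X : PowerSeries ℚ) ^ eexp q m ℓ α (extfn ℓ β) * qtMult q m ℓ (extfn ℓ β)

/-- The action of a matrix `g` on `F_q[x_1,…,x_n]` by linear substitution of variables. -/
noncomputable def lsub {n : ℕ} {Fq : Type} [Field Fq] (g : Matrix (Fin n) (Fin n) Fq) :
    MvPolynomial (Fin n) Fq →ₐ[Fq] MvPolynomial (Fin n) Fq :=
  MvPolynomial.aeval fun i => ∑ j, MvPolynomial.C (g i j) * MvPolynomial.X j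

/-- The parabolic subgroup `P_α ⊆ GL_n(F_q)`. -/
def Pa (Fq : Type) [Field Fq] (n ℓ : ℕ) (α : ℕ → ℕ) : Set (GL (Fin n) Fq) :=
  {g | ∀ r s : Fin n, ∀ i ≤ ℓ, (s : ℕ) < psum α i → psum α i ≤ (r : ℕ) →
        (g : Matrix (Fin n) (Fin n) Fq) r s = 0}

/-- The Frobenius power `𝔪^{[Q]} = (x_1^Q, …, x_n^Q)` as an `F_q`-submodule. -/
noncomputable def frobPow (Fq : Type) [Field Fq] (n Q : ℕ) :
    Submodule Fq (MvPolynomial (Fin n) Fq) :=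
  Submodule.restrictScalars Fq
    (Ideal.span (Set.range fun i : Fin n => (MvPolynomial.X i : MvPolynomial (Fin n) Fq) ^ Q))

/-- The degree-`d` homogeneous polynomials whose class in `S/𝔪^{[Q]}` is fixed by every
element of `H`. -/
noncomputable def fixDeg (Fq : Type) [Field Fq] (n Q : ℕ) (H : Set (GL (Fin n) Fq)) (d : ℕ) :
    Submodule Fq (MvPolynomial (Fin n) Fq) :=
  MvPolynomial.homogeneousSubmodule (Fin n) Fq d ⊓
    ⨅ g ∈ H,
      Submodule.comap
        ((lsub ((g : GL (Fin n) Fq) : Matrix (Fin n) (Fin n) Fq)).toLinearMap - LinearMap.id)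
        (frobPow Fq n Q)


section Basics
variable {F : Type} [Field F]

/-- The polynomial ring in two variables. -/
abbrev SS (F : Type) [Field F] := MvPolynomial (Fin 2) F

/-- The first variable. -/
noncomputable abbrev xv (F : Type) [Field F] : SS F := MvPolynomial.X 0
/-- The second variable. -/
noncomputable abbrev yv (F : Type) [Field F] : SS F := MvPolynomial.X 1

/-- exponent vector -/
noncomputable def ex (a b : ℕ) : Fin 2 →₀ ℕ := Finsupp.single 0 a + Finsupp.single 1 b

lemma ex_zero (a b : ℕ) : ex a b 0 = a := by simp [ex]
lemma ex_one (a b : ℕ) : ex a b 1 = b := by simp [ex]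
lemma ex_eta (s : Fin 2 →₀ ℕ) : ex (s 0) (s 1) = s := by
  ext i; fin_cases i <;> simp [ex]
lemma ex_inj {a b c d : ℕ} : ex a b = ex c d ↔ a = c ∧ b = d := by
  constructor
  · intro h
    have h0 := DFunLike.congr_fun h 0
    have h1 := DFunLike.congr_fun h 1
    simp only [ex_zero, ex_one] at h0 h1
    exact ⟨h0, h1⟩
  · rintro ⟨rfl, rfl⟩; rfl
lemma ex_degree (a b : ℕ) : (ex a b).degree = a + b := by
  simp [ex]

/-- the monomial x^a y^b -/
noncomputable def mo (F : Type) [Field F] (a b : ℕ) : SS F := xv F ^ a * yv F ^ b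

lemma mo_eq (a b : ℕ) : mo F a b = MvPolynomial.monomial (ex a b) 1 := by
  simp [mo, ex, MvPolynomial.X_pow_eq_monomial, MvPolynomial.monomial_mul]

lemma monomial_eq_mo (s : Fin 2 →₀ ℕ) (c : F) :
    MvPolynomial.monomial s c = c • mo F (s 0) (s 1) := by
  rw [mo_eq, ex_eta, MvPolynomial.smul_monomial]; simp

lemma mo_mul (a b c d : ℕ) : mo F a b * mo F c d = mo F (a + c) (b + d) := by
  simp only [mo]; ring

lemma mo_hom (a b : ℕ) : (mo F a b).IsHomogeneous (a + b) := by
  rw [mo_eq]; exact MvPolynomial.isHomogeneous_monomial _ (ex_degree a b)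

lemma mo_hom' {a b n : ℕ} (h : a + b = n) : (mo F a b).IsHomogeneous n := h ▸ mo_hom a b

lemma coeff_mo (a b c d : ℕ) :
    MvPolynomial.coeff (ex c d) (mo F a b) = if a = c ∧ b = d then 1 else 0 := by
  classical
  rw [mo_eq, MvPolynomial.coeff_monomial]; simp [ex_inj]

lemma dual_ext {M : Type*} [AddCommGroup M] [Module F M] {φ ψ : SS F →ₗ[F] M}
    (h : ∀ a b, φ (mo F a b) = ψ (mo F a b)) : φ = ψ := by
  apply MvPolynomial.linearMap_ext
  intro s
  ext
  have := h (s 0) (s 1)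
  simpa [mo_eq, ex_eta] using this

lemma lsub_X (g : Matrix (Fin 2) (Fin 2) F) (i : Fin 2) :
    lsub g (MvPolynomial.X i) = MvPolynomial.C (g i 0) * xv F + MvPolynomial.C (g i 1) * yv F := by
  simp [lsub, Fin.sum_univ_two]

lemma lsub_lsub (g h : Matrix (Fin 2) (Fin 2) F) (f : SS F) :
    lsub g (lsub h f) = lsub (h * g) f := by
  have : (lsub g).comp (lsub h) = lsub (h * g) := by
    apply MvPolynomial.algHom_ext
    intro i
    simp only [AlgHom.comp_apply, lsub_X, map_add, map_mul, MvPolynomial.algHom_C,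
      MvPolynomial.algebraMap_eq, Matrix.mul_apply, Fin.sum_univ_two]
    ring
  exact DFunLike.congr_fun this f

lemma lsub_one (f : SS F) : lsub (1 : Matrix (Fin 2) (Fin 2) F) f = f := by
  have : lsub (1 : Matrix (Fin 2) (Fin 2) F) = AlgHom.id F (SS F) := by
    apply MvPolynomial.algHom_ext
    intro i
    fin_cases i <;> simp [lsub_X]
  rw [this]; rfl

lemma lsub_hom (g : Matrix (Fin 2) (Fin 2) F) {f : SS F} {n : ℕ} (hf : f.IsHomogeneous n) :
    (lsub g f).IsHomogeneous n := by
  have := hf.aeval (fun i => ∑ j, MvPolynomial.C (g i j) * MvPolynomial.X j : Fin 2 → SS F) (n := 1)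
    (fun i => MvPolynomial.IsHomogeneous.sum _ _ _ fun j _ => MvPolynomial.isHomogeneous_C_mul_X _ _)
  simpa [lsub] using this

lemma lsub_hc (g : Matrix (Fin 2) (Fin 2) F) (f : SS F) (n : ℕ) :
    MvPolynomial.homogeneousComponent n (lsub g f) = lsub g (MvPolynomial.homogeneousComponent n f) := by
  have : (MvPolynomial.homogeneousComponent n).comp (lsub g).toLinearMap =
      (lsub g).toLinearMap.comp (MvPolynomial.homogeneousComponent n (R := F) (σ := Fin 2)) := by
    apply dual_ext
    intro a b
    have h1 := lsub_hom g (mo_hom (F := F) a b)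
    simp only [LinearMap.comp_apply, AlgHom.toLinearMap_apply]
    rw [MvPolynomial.homogeneousComponent_of_mem ((MvPolynomial.mem_homogeneousSubmodule _ _).2 h1),
      MvPolynomial.homogeneousComponent_of_mem ((MvPolynomial.mem_homogeneousSubmodule _ _).2 (mo_hom a b))]
    split_ifs <;> simp
  exact DFunLike.congr_fun this f

lemma hc_mul {d h : SS F} {δ : ℕ} (hd : d.IsHomogeneous δ) (n : ℕ) :
    MvPolynomial.homogeneousComponent (n + δ) (d * h) = d * MvPolynomial.homogeneousComponent n h := by
  have : (MvPolynomial.homogeneousComponent (n + δ)).comp (LinearMap.mulLeft F d) =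
      (LinearMap.mulLeft F d).comp (MvPolynomial.homogeneousComponent n (R := F) (σ := Fin 2)) := by
    apply dual_ext
    intro a b
    have h1 := hd.mul (mo_hom (F := F) a b)
    simp only [LinearMap.comp_apply, LinearMap.mulLeft_apply]
    rw [MvPolynomial.homogeneousComponent_of_mem ((MvPolynomial.mem_homogeneousSubmodule _ _).2 h1),
      MvPolynomial.homogeneousComponent_of_mem ((MvPolynomial.mem_homogeneousSubmodule _ _).2 (mo_hom a b))]
    have : n + δ = δ + (a + b) ↔ n = a + b := by omega
    simp only [this]
    split_ifs <;> simp
  exact DFunLike.congr_fun this h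

lemma hc_mul_lt {d h : SS F} {δ : ℕ} (hd : d.IsHomogeneous δ) (n : ℕ) (hn : n < δ) :
    MvPolynomial.homogeneousComponent n (d * h) = 0 := by
  have : (MvPolynomial.homogeneousComponent n).comp (LinearMap.mulLeft F d) =
      (0 : SS F →ₗ[F] SS F) := by
    apply dual_ext
    intro a b
    have h1 := hd.mul (mo_hom (F := F) a b)
    simp only [LinearMap.comp_apply, LinearMap.mulLeft_apply]
    rw [MvPolynomial.homogeneousComponent_of_mem ((MvPolynomial.mem_homogeneousSubmodule _ _).2 h1)]
    rw [if_neg (by omega)]; rfl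
  exact DFunLike.congr_fun this h

/-- Homogeneous polynomial as sum of monomials. -/
lemma hom_eq_sum {f : SS F} {n : ℕ} (hf : f.IsHomogeneous n) :
    f = ∑ a ∈ Finset.range (n + 1), MvPolynomial.coeff (ex a (n - a)) f • mo F a (n - a) := by
  ext s
  obtain ⟨c, d, rfl⟩ : ∃ c d, s = ex c d := ⟨s 0, s 1, (ex_eta s).symm⟩
  rw [MvPolynomial.coeff_sum]
  simp only [MvPolynomial.coeff_smul, coeff_mo, smul_eq_mul]
  by_cases h : c + d = n
  · rw [Finset.sum_eq_single c]
    · have : n - c = d := by omega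
      simp [this]
    · intro b _ hb; simp [hb]
    · intro hc; simp at hc; omega
  · rw [hf.coeff_eq_zero (by rw [ex_degree]; exact h)]
    symm; apply Finset.sum_eq_zero
    intro a ha
    rw [Finset.mem_range] at ha
    rw [if_neg (by omega), mul_zero]

/-- Invariant homogeneous polynomials -/
noncomputable def PInv (H : Subgroup (GL (Fin 2) F)) (n : ℕ) : Submodule F (SS F) where
  carrier := {f | f.IsHomogeneous n ∧ ∀ g ∈ H, lsub (g : Matrix (Fin 2) (Fin 2) F) f = f}
  add_mem' := by
    rintro a b ⟨ha, ha'⟩ ⟨hb, hb'⟩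
    exact ⟨ha.add hb, fun g hg => by rw [map_add, ha' g hg, hb' g hg]⟩
  zero_mem' := ⟨MvPolynomial.isHomogeneous_zero _ _ _, fun g _ => map_zero _⟩
  smul_mem' := by
    rintro c a ⟨ha, ha'⟩
    exact ⟨(MvPolynomial.homogeneousSubmodule (Fin 2) F n).smul_mem c ha,
      fun g hg => by rw [map_smul, ha' g hg]⟩

lemma mem_PInv {H : Subgroup (GL (Fin 2) F)} {n : ℕ} {f : SS F} :
    f ∈ PInv H n ↔ f.IsHomogeneous n ∧ ∀ g ∈ H, lsub (g : Matrix (Fin 2) (Fin 2) F) f = f := Iff.rfl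

lemma hom_fin (n : ℕ) : Module.Finite F (MvPolynomial.homogeneousSubmodule (Fin 2) F n) :=
  Module.Finite.iff_fg.2 (MvPolynomial.homogeneousSubmodule_fg _ _ n)

instance PInv_fin (H : Subgroup (GL (Fin 2) F)) (n : ℕ) : Module.Finite F (PInv H n) := by
  have := hom_fin (F := F) n
  have h : PInv H n ≤ MvPolynomial.homogeneousSubmodule (Fin 2) F n := fun f hf => hf.1
  exact Module.Finite.of_injective _ (Submodule.inclusion_injective h)

/-- Invariant functionals of degree k -/
noncomputable def DInv (H : Subgroup (GL (Fin 2) F)) (k : ℕ) : Submodule F (SS F →ₗ[F] F) where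
  carrier := {φ | (∀ a b, a + b ≠ k → φ (mo F a b) = 0) ∧
    ∀ g ∈ H, ∀ f, φ (lsub (g : Matrix (Fin 2) (Fin 2) F) f) = φ f}
  add_mem' := by
    rintro a b ⟨ha, ha'⟩ ⟨hb, hb'⟩
    exact ⟨fun i j h => by simp [ha i j h, hb i j h], fun g hg f => by simp [ha' g hg f, hb' g hg f]⟩
  zero_mem' := ⟨fun i j h => rfl, fun g _ f => rfl⟩
  smul_mem' := by
    rintro c a ⟨ha, ha'⟩
    exact ⟨fun i j h => by simp [ha i j h], fun g hg f => by simp [ha' g hg f]⟩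

lemma mem_DInv {H : Subgroup (GL (Fin 2) F)} {k : ℕ} {φ : SS F →ₗ[F] F} :
    φ ∈ DInv H k ↔ (∀ a b, a + b ≠ k → φ (mo F a b) = 0) ∧
    ∀ g ∈ H, ∀ f, φ (lsub (g : Matrix (Fin 2) (Fin 2) F) f) = φ f := Iff.rfl

instance DInv_fin (H : Subgroup (GL (Fin 2) F)) (k : ℕ) : Module.Finite F (DInv H k) := by
  let T : DInv H k →ₗ[F] (Fin (k + 1) → F) :=
    { toFun := fun φ i => φ.1 (mo F i (k - i))
      map_add' := fun a b => rfl
      map_smul' := fun c a => rfl }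
  apply Module.Finite.of_injective T
  rw [injective_iff_map_eq_zero]
  intro φ h
  apply Subtype.ext
  apply dual_ext
  intro a b
  by_cases hab : a + b = k
  · have := congrFun h ⟨a, by omega⟩
    have hb : k - a = b := by omega
    simpa [T, hb] using this
  · simpa using φ.2.1 a b hab

lemma DInv_hom_zero {H : Subgroup (GL (Fin 2) F)} {k n : ℕ} {φ : SS F →ₗ[F] F}
    (hφ : φ ∈ DInv H k) {f : SS F} (hf : f.IsHomogeneous n) (h : n ≠ k) : φ f = 0 := by
  rw [hom_eq_sum hf, map_sum]
  apply Finset.sum_eq_zero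
  intro a ha
  rw [Finset.mem_range] at ha
  rw [map_smul, hφ.1 _ _ (by omega), smul_zero]

lemma DInv_hc {H : Subgroup (GL (Fin 2) F)} {k : ℕ} {φ : SS F →ₗ[F] F}
    (hφ : φ ∈ DInv H k) (f : SS F) : φ (MvPolynomial.homogeneousComponent k f) = φ f := by
  have : φ.comp (MvPolynomial.homogeneousComponent k) = φ := by
    apply dual_ext
    intro a b
    rw [LinearMap.comp_apply,
      MvPolynomial.homogeneousComponent_of_mem ((MvPolynomial.mem_homogeneousSubmodule _ _).2 (mo_hom a b))]
    split_ifs with h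
    · rfl
    · rw [map_zero, hφ.1 a b (by omega)]
  exact DFunLike.congr_fun this f

end Basics


section Transfer
variable {F : Type} [Field F]

/-- The matrix underlying an element of GL_2. -/
abbrev gm (g : GL (Fin 2) F) : Matrix (Fin 2) (Fin 2) F := (g : Matrix (Fin 2) (Fin 2) F)

lemma gm_mul (g h : GL (Fin 2) F) : gm (g * h) = gm g * gm h := rfl
lemma lsub_gg (g h : GL (Fin 2) F) (f : SS F) : lsub (gm g) (lsub (gm h) f) = lsub (gm (h * g)) f := by
  rw [lsub_lsub, gm_mul]
lemma lsub_g1 (f : SS F) : lsub (gm (1 : GL (Fin 2) F)) f = f := lsub_one f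

/-- The transfer. -/
noncomputable def Tr (H : Subgroup (GL (Fin 2) F)) [Fintype H] : SS F →ₗ[F] SS F :=
  ∑ g : H, (lsub (gm g.1)).toLinearMap

lemma Tr_apply (H : Subgroup (GL (Fin 2) F)) [Fintype H] (f : SS F) :
    Tr H f = ∑ g : H, lsub (gm g.1) f := by
  simp [Tr]

lemma Tr_hom (H : Subgroup (GL (Fin 2) F)) [Fintype H] {f : SS F} {n : ℕ} (hf : f.IsHomogeneous n) :
    (Tr H f).IsHomogeneous n := by
  rw [Tr_apply]
  exact MvPolynomial.IsHomogeneous.sum _ _ _ fun g _ => lsub_hom _ hf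

lemma lsub_Tr (H : Subgroup (GL (Fin 2) F)) [Fintype H] (f : SS F) (g : GL (Fin 2) F) (hg : g ∈ H) :
    lsub (gm g) (Tr H f) = Tr H f := by
  rw [Tr_apply, map_sum]
  simp_rw [lsub_gg]
  exact Fintype.sum_equiv (Equiv.mulRight (⟨g, hg⟩ : H)) _ _ fun x => rfl

lemma Tr_lsub (H : Subgroup (GL (Fin 2) F)) [Fintype H] (f : SS F) (g : GL (Fin 2) F) (hg : g ∈ H) :
    Tr H (lsub (gm g) f) = Tr H f := by
  rw [Tr_apply, Tr_apply]
  simp_rw [lsub_gg]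
  exact Fintype.sum_equiv (Equiv.mulLeft (⟨g, hg⟩ : H)) _ _ fun x => rfl

lemma Tr_mem (H : Subgroup (GL (Fin 2) F)) [Fintype H] {f : SS F} {n : ℕ} (hf : f.IsHomogeneous n) :
    Tr H f ∈ PInv H n := ⟨Tr_hom H hf, fun g hg => lsub_Tr H f g hg⟩

lemma Tr_mul_inv (H : Subgroup (GL (Fin 2) F)) [Fintype H] {h : SS F}
    (hh : ∀ g ∈ H, lsub (gm g) h = h) (f : SS F) : Tr H (f * h) = Tr H f * h := by
  rw [Tr_apply, Tr_apply, Finset.sum_mul]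
  exact Finset.sum_congr rfl fun g _ => by rw [map_mul, hh g.1 g.2]

lemma phi_Tr {H : Subgroup (GL (Fin 2) F)} [Fintype H] {k : ℕ} {φ : SS F →ₗ[F] F}
    (hφ : φ ∈ DInv H k) (θ f : SS F) : φ (θ * Tr H f) = φ (Tr H θ * f) := by
  rw [Tr_apply, Tr_apply, Finset.mul_sum, Finset.sum_mul, map_sum, map_sum]
  refine Fintype.sum_equiv (Equiv.inv H) _ _ fun g => ?_
  rw [← hφ.2 (g⁻¹).1 (g⁻¹).2 (θ * _), map_mul]
  congr 2
  change lsub (gm (g.1)⁻¹) (lsub (gm g.1) f) = f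
  rw [lsub_gg, mul_inv_cancel, lsub_g1]

lemma quot_inv {H : Subgroup (GL (Fin 2) F)} {d0 : SS F} {δ : ℕ} (hd0 : d0 ∈ PInv H δ) (h0 : d0 ≠ 0)
    {n : ℕ} {f : SS F} (hf : f ∈ PInv H n) (hdvd : d0 ∣ f) :
    (n < δ ∧ f = 0) ∨ (δ ≤ n ∧ ∃ h ∈ PInv H (n - δ), f = d0 * h) := by
  obtain ⟨h, rfl⟩ := hdvd
  by_cases hn : n < δ
  · left
    refine ⟨hn, ?_⟩
    rw [← MvPolynomial.homogeneousComponent_eq_self hf.1, hc_mul_lt hd0.1 n hn]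
  · right
    refine ⟨by omega, MvPolynomial.homogeneousComponent (n - δ) h, ?_, ?_⟩
    · have e : d0 * h = d0 * MvPolynomial.homogeneousComponent (n - δ) h := by
        conv_lhs => rw [← MvPolynomial.homogeneousComponent_eq_self hf.1]
        rw [← hc_mul hd0.1 (n - δ), Nat.sub_add_cancel (by omega)]
      have e' := mul_left_cancel₀ h0 e
      rw [← e']
      refine ⟨e' ▸ MvPolynomial.homogeneousComponent_isHomogeneous _ _, fun g hg => ?_⟩
      have := hf.2 g hg
      rw [map_mul, hd0.2 g hg] at this
      exact mul_left_cancel₀ h0 this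
    · conv_lhs => rw [← MvPolynomial.homogeneousComponent_eq_self hf.1]
      rw [← hc_mul hd0.1 (n - δ), Nat.sub_add_cancel (by omega)]

/-- functionals killing d0 S -/
noncomputable def KInv (H : Subgroup (GL (Fin 2) F)) (d0 : SS F) (k : ℕ) :
    Submodule F (SS F →ₗ[F] F) where
  carrier := {φ | φ ∈ DInv H k ∧ ∀ f, φ (d0 * f) = 0}
  add_mem' := by
    rintro a b ⟨ha, ha'⟩ ⟨hb, hb'⟩
    exact ⟨add_mem ha hb, fun f => by simp [ha' f, hb' f]⟩
  zero_mem' := ⟨zero_mem _, fun _ => rfl⟩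
  smul_mem' := by
    rintro c a ⟨ha, ha'⟩
    exact ⟨Submodule.smul_mem _ _ ha, fun f => by simp [ha' f]⟩

theorem finrank_DInv {H : Subgroup (GL (Fin 2) F)} [Fintype H] {d0 θ : SS F} {δ : ℕ}
    (hd0 : d0 ∈ PInv H δ) (h0 : d0 ≠ 0) (hθ : θ.IsHomogeneous δ) {c : F} (hc : c ≠ 0)
    (hTrθ : Tr H θ = c • d0) (hdvd : ∀ f, ∀ n, f.IsHomogeneous n → d0 ∣ Tr H f) (k : ℕ) :
    Module.finrank F (DInv H k) = Module.finrank F (KInv H d0 k) +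
      if 2 * δ ≤ k then Module.finrank F (PInv H (k - 2 * δ)) else 0 := by
  -- key
  have key : ∀ φ ∈ DInv H k, ∀ f : SS F, φ (d0 * f) = c⁻¹ * φ (θ * Tr H f) := by
    intro φ hφ f
    rw [phi_Tr hφ, hTrθ, smul_mul_assoc, map_smul, smul_eq_mul, ← mul_assoc, inv_mul_cancel₀ hc, one_mul]
  by_cases hk : 2 * δ ≤ k
  · rw [if_pos hk]
    let Λ : DInv H k →ₗ[F] (PInv H (k - 2 * δ) →ₗ[F] F) :=
      { toFun := fun φ => φ.1.comp ((LinearMap.mulLeft F (θ * d0)).comp (PInv H (k - 2 * δ)).subtype)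
        map_add' := fun a b => rfl
        map_smul' := fun a b => rfl }
    have hΛ : ∀ φ h, Λ φ h = φ.1 (θ * d0 * h.1) := fun _ _ => rfl
    have hsurj : Function.Surjective Λ := by
      intro l
      let m : PInv H (k - 2 * δ) →ₗ[F] SS F :=
        (LinearMap.mulLeft F (d0 * d0)).comp (PInv H (k - 2 * δ)).subtype
      have hm : LinearMap.ker m = ⊥ := by
        rw [LinearMap.ker_eq_bot']
        intro h hh
        have : d0 * d0 * h.1 = 0 := hh
        apply Subtype.ext
        simpa [h0] using this
      obtain ⟨r, hr⟩ := m.exists_leftInverse_of_injective hm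
      let φ : SS F →ₗ[F] F := c⁻¹ • ((l.comp r).comp ((Tr H).comp (MvPolynomial.homogeneousComponent k)))
      have hφ : φ ∈ DInv H k := by
        constructor
        · intro a b hab
          simp only [φ, LinearMap.smul_apply, LinearMap.comp_apply]
          rw [MvPolynomial.homogeneousComponent_of_mem ((MvPolynomial.mem_homogeneousSubmodule _ _).2 (mo_hom a b)),
            if_neg (by omega)]
          simp
        · intro g hg f
          simp only [φ, LinearMap.smul_apply, LinearMap.comp_apply]
          rw [lsub_hc, Tr_lsub H _ g hg]
      refine ⟨⟨φ, hφ⟩, ?_⟩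
      ext h
      rw [hΛ]
      change c⁻¹ • l (r (Tr H (MvPolynomial.homogeneousComponent k (θ * d0 * h.1)))) = l h
      have hh := h.2
      have hom : (θ * d0 * h.1).IsHomogeneous k := by
        have := (hθ.mul hd0.1).mul hh.1
        rwa [show δ + δ + (k - 2 * δ) = k by omega] at this
      rw [MvPolynomial.homogeneousComponent_eq_self hom, mul_assoc, Tr_mul_inv, hTrθ]
      · have : c • d0 * (d0 * h.1) = c • m h := by
          simp only [m, LinearMap.comp_apply, LinearMap.mulLeft_apply, Submodule.subtype_apply, smul_mul_assoc, mul_assoc]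
        rw [this, map_smul]
        have hr' : r (m h) = h := DFunLike.congr_fun hr h
        rw [hr', map_smul, smul_smul, inv_mul_cancel₀ hc, one_smul]
      · intro g hg
        rw [map_mul, hd0.2 g hg, hh.2 g hg]
    have hker : (LinearMap.ker Λ).map (DInv H k).subtype = KInv H d0 k := by
      ext φ
      constructor
      · rintro ⟨ψ, hψ, rfl⟩
        refine ⟨ψ.2, ?_⟩
        have hψ' : ∀ h : PInv H (k - 2 * δ), ψ.1 (θ * d0 * h.1) = 0 := fun h => by
          rw [← hΛ, LinearMap.mem_ker.1 hψ]; rfl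
        have : ψ.1.comp (LinearMap.mulLeft F d0) = 0 := by
          apply dual_ext
          intro a b
          change ψ.1 (d0 * mo F a b) = 0
          by_cases hab : δ + (a + b) = k
          · rw [key ψ.1 ψ.2]
            rcases quot_inv hd0 h0 (Tr_mem H (mo_hom a b)) (hdvd _ _ (mo_hom a b)) with ⟨_, h⟩ | ⟨hle, h, hh, he⟩
            · rw [h]; simp
            · rw [he, ← mul_assoc]
              have hh' : h ∈ PInv H (k - 2 * δ) := by rwa [show k - 2 * δ = a + b - δ by omega]
              rw [hψ' ⟨h, hh'⟩, mul_zero]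
          · exact DInv_hom_zero ψ.2 (hd0.1.mul (mo_hom a b)) hab
        intro f
        exact DFunLike.congr_fun this f
      · rintro ⟨h1, h2⟩
        refine ⟨⟨φ, h1⟩, ?_, rfl⟩
        rw [SetLike.mem_coe, LinearMap.mem_ker]
        ext h
        rw [hΛ]
        change φ (θ * d0 * h.1) = 0
        rw [mul_comm θ, mul_assoc, h2]
    have := LinearMap.finrank_range_add_finrank_ker (K := F) (V := DInv H k) (V₂ := PInv H (k - 2 * δ) →ₗ[F] F) Λ
    rw [LinearMap.range_eq_top.2 hsurj, finrank_top, Subspace.dual_finrank_eq] at this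
    rw [← this, ← hker, Submodule.finrank_map_subtype_eq, add_comm]
  · rw [if_neg hk, add_zero]
    have : DInv H k = KInv H d0 k := by
      apply le_antisymm
      · intro φ hφ
        refine ⟨hφ, ?_⟩
        have : φ.comp (LinearMap.mulLeft F d0) = 0 := by
          apply dual_ext
          intro a b
          change φ (d0 * mo F a b) = 0
          by_cases hab : δ + (a + b) = k
          · rw [key φ hφ]
            rcases quot_inv hd0 h0 (Tr_mem H (mo_hom a b)) (hdvd _ _ (mo_hom a b)) with ⟨_, h⟩ | ⟨hle, h, hh, he⟩
            · rw [h]; simp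
            · omega
          · exact DInv_hom_zero hφ (hd0.1.mul (mo_hom a b)) hab
        intro f
        exact DFunLike.congr_fun this f
      · exact fun φ h => h.1
    rw [this]

/-- evaluation at (1,0) -/
noncomputable def ev10 (F : Type) [Field F] : SS F →ₐ[F] F := MvPolynomial.aeval ![1, 0]

lemma ev10_mo (a b : ℕ) : ev10 F (mo F a b) = if b = 0 then 1 else 0 := by
  simp [ev10, mo, zero_pow_eq]

lemma ev10_hom {f : SS F} {n : ℕ} (hf : f.IsHomogeneous n) :
    ev10 F f = MvPolynomial.coeff (ex n 0) f := by
  conv_lhs => rw [hom_eq_sum hf]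
  rw [map_sum, Finset.sum_eq_single n]
  · rw [map_smul, ev10_mo]; simp
  · intro a ha han
    rw [Finset.mem_range] at ha
    rw [map_smul, ev10_mo, if_neg (by omega), smul_zero]
  · intro h; simp at h

lemma y_dvd_iff {f : SS F} {n : ℕ} (hf : f.IsHomogeneous n) : yv F ∣ f ↔ ev10 F f = 0 := by
  constructor
  · rintro ⟨h, rfl⟩
    simp [ev10]
  · intro h
    rw [ev10_hom hf] at h
    rw [hom_eq_sum hf]
    apply Finset.dvd_sum
    intro a ha
    rw [Finset.mem_range] at ha
    by_cases han : a = n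
    · subst han
      rw [Nat.sub_self, h, zero_smul]; exact dvd_zero _
    · apply dvd_smul_of_dvd
      rw [mo]
      exact Dvd.dvd.mul_left (dvd_pow_self _ (by omega)) _

lemma PInv_mul {H : Subgroup (GL (Fin 2) F)} {a b : SS F} {m n k : ℕ} (ha : a ∈ PInv H m) (hb : b ∈ PInv H n)
    (hk : m + n = k) : a * b ∈ PInv H k := by
  subst hk
  exact ⟨ha.1.mul hb.1, fun g hg => by rw [map_mul, ha.2 g hg, hb.2 g hg]⟩

lemma PInv_pow {H : Subgroup (GL (Fin 2) F)} {a : SS F} {m : ℕ} (ha : a ∈ PInv H m) (j : ℕ) :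
    a ^ j ∈ PInv H (m * j) :=
  ⟨ha.1.pow j, fun g hg => by rw [map_pow, ha.2 g hg]⟩

/-- recursion for invariants -/
theorem finrank_PInv {H : Subgroup (GL (Fin 2) F)} {d0 d1 : SS F} {δ δ1 : ℕ}
    (hd0 : d0 ∈ PInv H δ) (h0 : d0 ≠ 0) (hd1 : d1 ∈ PInv H δ1)
    (hd0y : yv F ∣ d0)
    (hlead : ev10 F d1 = 1)
    (hdvd : ∀ n, ∀ f ∈ PInv H n, yv F ∣ f → d0 ∣ f)
    (hlead0 : ∀ n, ∀ f ∈ PInv H n, ev10 F f ≠ 0 → δ1 ∣ n) (n : ℕ) :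
    Module.finrank F (PInv H n) = (if δ1 ∣ n then 1 else 0) +
      if δ ≤ n then Module.finrank F (PInv H (n - δ)) else 0 := by
  let ε : PInv H n →ₗ[F] F := (ev10 F).toLinearMap.comp (PInv H n).subtype
  have hε : ∀ f, ε f = ev10 F f.1 := fun _ => rfl
  have hr := LinearMap.finrank_range_add_finrank_ker ε
  rw [← hr]
  congr 1
  · split_ifs with hd
    · obtain ⟨j, rfl⟩ := hd
      have : LinearMap.range ε = ⊤ := by
        rw [LinearMap.range_eq_top]
        intro c
        refine ⟨c • ⟨d1 ^ j, PInv_pow hd1 j⟩, ?_⟩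
        rw [map_smul, hε]
        simp [hlead]
      rw [this, finrank_top, Module.finrank_self]
    · have : LinearMap.range ε = ⊥ := by
        rw [LinearMap.range_eq_bot]
        ext f
        by_contra hf
        exact hd (hlead0 n f.1 f.2 hf)
      rw [this, finrank_bot]
  · have hk : ∀ f : PInv H n, f ∈ LinearMap.ker ε ↔ d0 ∣ f.1 := by
      intro f
      rw [LinearMap.mem_ker, hε, ← y_dvd_iff f.2.1]
      exact ⟨fun h => hdvd n f.1 f.2 h, fun h => hd0y.trans h⟩
    split_ifs with hn
    · let M : PInv H (n - δ) →ₗ[F] SS F := (LinearMap.mulLeft F d0).comp (PInv H (n - δ)).subtype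
      have hM : (LinearMap.ker ε).map (PInv H n).subtype = LinearMap.range M := by
        ext f
        constructor
        · rintro ⟨f, hf, rfl⟩
          rw [SetLike.mem_coe, hk] at hf
          rcases quot_inv hd0 h0 f.2 hf with ⟨h, _⟩ | ⟨_, h, hh, he⟩
          · omega
          · exact ⟨⟨h, hh⟩, he.symm⟩
        · rintro ⟨h, rfl⟩
          refine ⟨⟨d0 * h.1, PInv_mul hd0 h.2 (by omega)⟩, ?_, rfl⟩
          rw [SetLike.mem_coe, hk]
          exact dvd_mul_right _ _
      rw [← Submodule.finrank_map_subtype_eq, hM, LinearMap.finrank_range_of_inj]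
      intro a b hab
      apply Subtype.ext
      exact mul_left_cancel₀ h0 hab
    · have : LinearMap.ker ε = ⊥ := by
        rw [eq_bot_iff]
        intro f hf
        rw [hk] at hf
        rcases quot_inv hd0 h0 f.2 hf with ⟨_, h⟩ | ⟨h, _⟩
        · exact (Submodule.mem_bot F).2 (Subtype.ext h)
        · omega
      rw [this, finrank_bot]
end Transfer


section Groups
variable {F : Type} [Field F]

/-- 2 by 2 invertible matrix -/
noncomputable def mk2 (a b c d : F) (h : a * d - b * c ≠ 0) : GL (Fin 2) F :=
  Matrix.GeneralLinearGroup.mkOfDetNeZero !![a, b; c, d] (by rwa [Matrix.det_fin_two_of])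

lemma gm_mk2 (a b c d : F) (h : a * d - b * c ≠ 0) : gm (mk2 a b c d h) = !![a, b; c, d] := rfl

lemma gm_det (g : GL (Fin 2) F) : gm g 0 0 * gm g 1 1 - gm g 0 1 * gm g 1 0 ≠ 0 := by
  have := g.det.ne_zero
  rwa [Matrix.GeneralLinearGroup.val_det_apply, Matrix.det_fin_two] at this

/-- The Borel subgroup. -/
def BB (F : Type) [Field F] : Subgroup (GL (Fin 2) F) where
  carrier := {g | gm g 1 0 = 0}
  mul_mem' := by
    intro a b ha hb
    simp only [Set.mem_ofPred_eq] at *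
    rw [gm_mul, Matrix.mul_apply, Fin.sum_univ_two, ha, hb]; simp
  one_mem' := by simp
  inv_mem' := by
    intro g hg
    simp only [Set.mem_ofPred_eq] at *
    have h1 : (gm g * gm g⁻¹) 1 0 = 0 := by
      rw [← gm_mul, mul_inv_cancel]; simp
    rw [Matrix.mul_apply, Fin.sum_univ_two, hg, zero_mul, zero_add] at h1
    have := gm_det g
    rw [hg] at this
    have h2 : gm g 1 1 ≠ 0 := by rintro h; rw [h] at this; simp at this
    exact (mul_eq_zero.1 h1).resolve_left h2

lemma mem_BB {g : GL (Fin 2) F} : g ∈ BB F ↔ gm g 1 0 = 0 := Iff.rfl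

/-- diagonal -/
noncomputable def dg (s t : Fˣ) : GL (Fin 2) F := mk2 s 0 0 t (by simp)
/-- unipotent -/
noncomputable def up (c : F) : GL (Fin 2) F := mk2 1 c 0 1 (by simp)

lemma dg_mem (s t : Fˣ) : dg s t ∈ BB F := rfl
lemma up_mem (c : F) : up c ∈ BB F := rfl

lemma lsub_dg_x (s t : Fˣ) : lsub (gm (dg s t)) (xv F) = MvPolynomial.C (s : F) * xv F := by
  rw [lsub_X, dg, gm_mk2]; simp
lemma lsub_dg_y (s t : Fˣ) : lsub (gm (dg s t)) (yv F) = MvPolynomial.C (t : F) * yv F := by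
  rw [lsub_X, dg, gm_mk2]; simp
lemma lsub_up_x (c : F) : lsub (gm (up c)) (xv F) = xv F + MvPolynomial.C c * yv F := by
  rw [lsub_X, up, gm_mk2]; simp
lemma lsub_up_y (c : F) : lsub (gm (up c)) (yv F) = yv F := by
  rw [lsub_X, up, gm_mk2]; simp

lemma lsub_dg_mo (s t : Fˣ) (a b : ℕ) :
    lsub (gm (dg s t)) (mo F a b) = ((s : F) ^ a * (t : F) ^ b) • mo F a b := by
  rw [mo, map_mul, map_pow, map_pow, lsub_dg_x, lsub_dg_y, mul_pow, mul_pow, MvPolynomial.smul_eq_C_mul,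
    map_mul, map_pow, map_pow]
  ring

lemma coeff_dg (s t : Fˣ) (a b : ℕ) (f : SS F) : MvPolynomial.coeff (ex a b) (lsub (gm (dg s t)) f) =
    ((s : F) ^ a * (t : F) ^ b) * MvPolynomial.coeff (ex a b) f := by
  have : (MvPolynomial.lcoeff F (ex a b)).comp (lsub (gm (dg s t))).toLinearMap =
      ((s : F) ^ a * (t : F) ^ b) • MvPolynomial.lcoeff F (ex a b) := by
    apply dual_ext
    intro i j
    simp only [LinearMap.comp_apply, AlgHom.toLinearMap_apply, lsub_dg_mo, LinearMap.smul_apply,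
      map_smul, MvPolynomial.lcoeff_apply, coeff_mo]
    split_ifs with h
    · rw [h.1, h.2]
    · simp
  exact DFunLike.congr_fun this f

variable [Fintype F]

lemma card_gt : 1 < Fintype.card F := Fintype.one_lt_card

lemma torus {H : Subgroup (GL (Fin 2) F)} (hH : BB F ≤ H) {n : ℕ} {f : SS F} (hf : f ∈ PInv H n) {a b : ℕ}
    (h : MvPolynomial.coeff (ex a b) f ≠ 0) : Fintype.card F - 1 ∣ a ∧ Fintype.card F - 1 ∣ b := by
  constructor
  · rw [← FiniteField.forall_pow_eq_one_iff]
    intro s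
    have := coeff_dg s 1 a b f
    rw [hf.2 _ (hH (dg_mem s 1))] at this
    simp only [Units.val_one, one_pow, mul_one] at this
    have h2 := mul_right_cancel₀ h ((one_mul _).trans this)
    ext; simpa using h2.symm
  · rw [← FiniteField.forall_pow_eq_one_iff]
    intro s
    have := coeff_dg 1 s a b f
    rw [hf.2 _ (hH (dg_mem 1 s))] at this
    simp only [Units.val_one, one_pow, one_mul] at this
    have h2 := mul_right_cancel₀ h ((one_mul _).trans this)
    ext; simpa using h2.symm

lemma ypow_dvd {H : Subgroup (GL (Fin 2) F)} (hH : BB F ≤ H) {n : ℕ} {f : SS F} (hf : f ∈ PInv H n)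
    (hy : yv F ∣ f) : yv F ^ (Fintype.card F - 1) ∣ f := by
  rw [y_dvd_iff hf.1, ev10_hom hf.1] at hy
  rw [hom_eq_sum hf.1]
  apply Finset.dvd_sum
  intro a ha
  rw [Finset.mem_range] at ha
  by_cases h0 : MvPolynomial.coeff (ex a (n - a)) f = 0
  · rw [h0, zero_smul]; exact dvd_zero _
  · apply dvd_smul_of_dvd
    rw [mo]
    apply Dvd.dvd.mul_left
    apply pow_dvd_pow
    have han : a ≠ n := by
      rintro rfl
      simp [hy] at h0
    exact Nat.le_of_dvd (by omega) (torus hH hf h0).2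

open Polynomial in
lemma poly_inv_deg (d : ℕ) : ∀ h : F[X], h.natDegree = d → (∀ c : F, h.comp (Polynomial.X + Polynomial.C c) = h) →
    Fintype.card F ∣ d := by
  induction d using Nat.strong_induction_on with
  | _ d ih =>
  intro h hd hc
  set q := Fintype.card F with hq
  have hq1 : 1 < q := card_gt
  have hdv : (Polynomial.X ^ q - Polynomial.X : F[X]) ∣ h - Polynomial.C (h.eval 0) := by
    by_cases h0 : h - Polynomial.C (h.eval 0) = 0
    · rw [h0]; exact dvd_zero _
    have hp : (Polynomial.X ^ q - Polynomial.X : F[X]) = ((Finset.univ : Finset F).val.map fun a => Polynomial.X - Polynomial.C a).prod := by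
      rw [← FiniteField.roots_X_pow_card_sub_X F, Polynomial.prod_multiset_X_sub_C_of_monic_of_roots_card_eq]
      · exact Polynomial.monic_X_pow_sub (by rw [Polynomial.degree_X]; exact_mod_cast hq1)
      · rw [FiniteField.roots_X_pow_card_sub_X, FiniteField.X_pow_card_sub_X_natDegree_eq F hq1]; simp [hq]
    rw [hp, Multiset.prod_X_sub_C_dvd_iff_le_roots h0, Finset.val_le_iff_val_subset]
    intro c _
    rw [Polynomial.mem_roots h0]
    have := congrArg (Polynomial.eval 0) (hc c)
    simp only [Polynomial.eval_comp, Polynomial.eval_add, Polynomial.eval_X, Polynomial.eval_C, zero_add] at this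
    simp [this]
  obtain ⟨k, hk⟩ := hdv
  have hne : (Polynomial.X ^ q - Polynomial.X : F[X]) ≠ 0 := FiniteField.X_pow_card_sub_X_ne_zero F hq1
  by_cases hk0 : k = 0
  · rw [hk0, mul_zero, sub_eq_zero] at hk
    rw [hk, Polynomial.natDegree_C] at hd
    rw [← hd]; exact dvd_zero _
  · have hdeg : d = q + k.natDegree := by
      rw [← hd, ← FiniteField.X_pow_card_sub_X_natDegree_eq F hq1, ← Polynomial.natDegree_mul hne hk0, ← hk]
      simp
    rw [hdeg]
    refine (Nat.dvd_add_right (dvd_refl q)).2 (ih k.natDegree (by omega) k rfl ?_)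
    intro c
    have h1 := congrArg (fun r : F[X] => r.comp (Polynomial.X + Polynomial.C c)) hk
    simp only [Polynomial.sub_comp, Polynomial.mul_comp, hc c, Polynomial.C_comp, Polynomial.pow_comp, Polynomial.X_comp] at h1
    have h2 : (Polynomial.X + Polynomial.C c : F[X]) ^ q = Polynomial.X ^ q + Polynomial.C c := by
      have := map_add (FiniteField.frobeniusAlgHom F F[X]) Polynomial.X (Polynomial.C c)
      simp only [FiniteField.coe_frobeniusAlgHom] at this
      rw [← hq] at this
      rw [this, ← Polynomial.C_pow, hq, FiniteField.pow_card]
    rw [h2, hk] at h1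
    have h3 : (Polynomial.X ^ q + Polynomial.C c - (Polynomial.X + Polynomial.C c) : F[X]) = Polynomial.X ^ q - Polynomial.X := by ring
    rw [h3] at h1
    exact (mul_left_cancel₀ hne h1).symm

/-- dehomogenization -/
noncomputable def deh (F : Type) [Field F] : SS F →ₐ[F] Polynomial F :=
  MvPolynomial.aeval ![Polynomial.X, 1]

lemma deh_mo (a b : ℕ) : deh F (mo F a b) = Polynomial.X ^ a := by simp [deh, mo]

lemma deh_up (c : F) (f : SS F) :
    deh F (lsub (gm (up c)) f) = (deh F f).comp (Polynomial.X + Polynomial.C c) := by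
  have : (deh F).comp (lsub (gm (up c))) = (Polynomial.aeval (Polynomial.X + Polynomial.C c : Polynomial F)).comp (deh F) := by
    apply MvPolynomial.algHom_ext
    intro i
    fin_cases i
    · simp [lsub_up_x, deh, Polynomial.C_eq_algebraMap]
    · simp [lsub_up_y, deh]
  exact DFunLike.congr_fun this f

lemma lead_dvd {H : Subgroup (GL (Fin 2) F)} (hH : BB F ≤ H) {n : ℕ} {f : SS F} (hf : f ∈ PInv H n)
    (h : ev10 F f ≠ 0) : Fintype.card F * (Fintype.card F - 1) ∣ n := by
  rw [ev10_hom hf.1] at h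
  have hq1 : 1 < Fintype.card F := card_gt
  have hcop : Nat.Coprime (Fintype.card F) (Fintype.card F - 1) := by
    have := Nat.coprime_self_add_right (m := Fintype.card F - 1) (n := 1)
    have h2 : Nat.Coprime (Fintype.card F - 1) (Fintype.card F - 1 + 1) := by simp
    rw [Nat.sub_add_cancel hq1.le] at h2
    exact h2.symm
  refine hcop.mul_dvd_of_dvd_of_dvd ?_ (torus hH hf h).1
  have hdeh : deh F f = ∑ a ∈ Finset.range (n + 1), MvPolynomial.coeff (ex a (n - a)) f • Polynomial.X ^ a := by
    conv_lhs => rw [hom_eq_sum hf.1]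
    rw [map_sum]
    simp only [map_smul, deh_mo]
  apply poly_inv_deg n (deh F f)
  · apply Polynomial.natDegree_eq_of_le_of_coeff_ne_zero
    · rw [hdeh]
      apply Polynomial.natDegree_sum_le_of_forall_le
      intro i hi
      rw [Finset.mem_range] at hi
      refine (Polynomial.natDegree_smul_le _ _).trans ?_
      rw [Polynomial.natDegree_X_pow]; omega
    · rw [hdeh, Polynomial.finsetSum_coeff, Finset.sum_eq_single n]
      · simpa using h
      · intro b _ hb
        simp [Polynomial.coeff_X_pow, hb.symm]
      · simp
  · intro c
    rw [← deh_up, hf.2 _ (hH (up_mem c))]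

end Groups


section Dickson
variable {F : Type} [Field F] [Fintype F]

lemma frob_add {A : Type*} [CommRing A] [Algebra F A] (u v : A) :
    (u + v) ^ Fintype.card F = u ^ Fintype.card F + v ^ Fintype.card F :=
  map_add (FiniteField.frobeniusAlgHom F A) u v

lemma frob_sub {A : Type*} [CommRing A] [Algebra F A] (u v : A) :
    (u - v) ^ Fintype.card F = u ^ Fintype.card F - v ^ Fintype.card F :=
  map_sub (FiniteField.frobeniusAlgHom F A) u v

lemma frob_lin (m : ℕ) (a b : F) (u v : SS F) :
    (MvPolynomial.C a * u + MvPolynomial.C b * v) ^ Fintype.card F ^ m =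
      MvPolynomial.C a * u ^ Fintype.card F ^ m + MvPolynomial.C b * v ^ Fintype.card F ^ m := by
  induction m with
  | zero => simp
  | succ k ih =>
    rw [pow_succ, pow_mul, ih, frob_add (F := F), mul_pow, mul_pow, ← map_pow, ← map_pow,
      FiniteField.pow_card, FiniteField.pow_card, ← pow_mul, ← pow_mul]

/-- x^{q^m} y - x y^{q^m} -/
noncomputable def LL (F : Type) [Field F] [Fintype F] (m : ℕ) : SS F :=
  xv F ^ Fintype.card F ^ m * yv F - xv F * yv F ^ Fintype.card F ^ m

lemma lsub_LL (m : ℕ) (g : GL (Fin 2) F) : lsub (gm g) (LL F m) =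
    MvPolynomial.C (gm g 0 0 * gm g 1 1 - gm g 0 1 * gm g 1 0) * LL F m := by
  simp only [LL, map_sub, map_mul, map_pow, lsub_X, frob_lin]
  ring

/-- Dickson invariant -/
noncomputable def d1 (F : Type) [Field F] [Fintype F] : SS F :=
  (xv F ^ Fintype.card F - xv F * yv F ^ (Fintype.card F - 1)) ^ (Fintype.card F - 1) +
    yv F ^ (Fintype.card F * (Fintype.card F - 1))

lemma LL_eq : LL F 1 = yv F * (xv F ^ Fintype.card F - xv F * yv F ^ (Fintype.card F - 1)) := by
  have hq1 : 1 < Fintype.card F := card_gt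
  obtain ⟨r, hr⟩ : ∃ r, Fintype.card F = r + 1 := ⟨Fintype.card F - 1, by omega⟩
  rw [LL, hr, pow_one, Nat.add_sub_cancel]; ring

lemma LL_d1 : LL F 1 * d1 F = LL F 2 := by
  have hq1 : 1 < Fintype.card F := card_gt
  obtain ⟨r, hr⟩ : ∃ r, Fintype.card F = r + 1 := ⟨Fintype.card F - 1, by omega⟩
  have h := frob_sub (F := F) (xv F ^ Fintype.card F) (xv F * yv F ^ (Fintype.card F - 1))
  rw [LL_eq, d1, LL]
  rw [hr, Nat.add_sub_cancel] at *
  have : yv F * (xv F ^ (r + 1) - xv F * yv F ^ r) * ((xv F ^ (r + 1) - xv F * yv F ^ r) ^ r + yv F ^ ((r + 1) * r)) =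
    yv F * (xv F ^ (r + 1) - xv F * yv F ^ r) ^ (r + 1) + yv F * (xv F ^ (r + 1) - xv F * yv F ^ r) * yv F ^ ((r + 1) * r) := by ring
  rw [this, h]
  ring

lemma ev01_LL (m : ℕ) : MvPolynomial.coeff (ex 1 (Fintype.card F ^ (m + 1))) (LL F (m + 1)) = -1 := by
  have hq1 : 1 < Fintype.card F := card_gt
  have : LL F (m + 1) = mo F (Fintype.card F ^ (m + 1)) 1 - mo F 1 (Fintype.card F ^ (m + 1)) := by simp [LL, mo]
  have h1 : 1 < Fintype.card F ^ (m + 1) := Nat.one_lt_pow (by omega) hq1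
  rw [this, MvPolynomial.coeff_sub, coeff_mo, coeff_mo, if_neg (by omega), if_pos (by simp)]
  simp

lemma LL_ne (m : ℕ) : LL F (m + 1) ≠ 0 := by
  intro h
  have := ev01_LL (F := F) m
  rw [h] at this
  simp at this

lemma LL_hom : (LL F 1).IsHomogeneous (Fintype.card F + 1) := by
  have : LL F 1 = mo F (Fintype.card F) 1 - mo F 1 (Fintype.card F) := by simp [LL, mo]
  rw [this]
  exact (mo_hom _ _).sub (mo_hom' (by omega))

lemma d1_mem (H : Subgroup (GL (Fin 2) F)) : d1 F ∈ PInv H (Fintype.card F * (Fintype.card F - 1)) := by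
  have hq1 : 1 < Fintype.card F := card_gt
  constructor
  · rw [d1]
    apply MvPolynomial.IsHomogeneous.add
    · apply MvPolynomial.IsHomogeneous.pow
      apply MvPolynomial.IsHomogeneous.sub
      · exact MvPolynomial.isHomogeneous_X_pow _ _
      · have := mo_hom' (F := F) (a := 1) (b := Fintype.card F - 1) (n := Fintype.card F) (by omega)
        simpa [mo] using this
    · exact MvPolynomial.isHomogeneous_X_pow _ _
  · intro g _
    have h1 := congrArg (lsub (gm g)) (LL_d1 (F := F))
    rw [map_mul, lsub_LL, lsub_LL, ← LL_d1, mul_assoc] at h1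
    have h2 := mul_left_cancel₀ (fun h => gm_det g ((MvPolynomial.C_eq_zero).1 h)) h1
    exact mul_left_cancel₀ (LL_ne 0) h2

lemma d1_ev : ev10 F (d1 F) = 1 := by
  have hq1 : 1 < Fintype.card F := card_gt
  have h0 : Fintype.card F - 1 ≠ 0 := by omega
  simp [d1, ev10, h0, (by omega : Fintype.card F ≠ 0)]

lemma y_mem : yv F ^ (Fintype.card F - 1) ∈ PInv (BB F) (Fintype.card F - 1) := by
  refine ⟨MvPolynomial.isHomogeneous_X_pow _ _, fun g hg => ?_⟩
  have := gm_det g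
  rw [mem_BB] at hg
  rw [hg] at this
  have h : gm g 1 1 ≠ 0 := by rintro h; simp [h] at this
  have e := lsub_X (gm g) 1
  rw [hg] at e
  rw [map_pow, e, map_zero, zero_mul, zero_add, mul_pow, ← map_pow, FiniteField.pow_card_sub_one_eq_one _ h]
  simp

lemma LL_mem (H : Subgroup (GL (Fin 2) F)) :
    LL F 1 ^ (Fintype.card F - 1) ∈ PInv H ((Fintype.card F + 1) * (Fintype.card F - 1)) := by
  refine ⟨LL_hom.pow _, fun g hg => ?_⟩
  rw [map_pow, lsub_LL, mul_pow, ← map_pow, FiniteField.pow_card_sub_one_eq_one _ (gm_det g)]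
  simp

/-- lsub as an equivalence -/
noncomputable def lsubE (g : GL (Fin 2) F) : SS F ≃ₐ[F] SS F :=
  AlgEquiv.ofAlgHom (lsub (gm g)) (lsub (gm g⁻¹))
    (AlgHom.ext fun f => by
      change lsub (gm g) (lsub (gm g⁻¹) f) = f
      rw [lsub_gg, inv_mul_cancel, lsub_g1])
    (AlgHom.ext fun f => by
      change lsub (gm g⁻¹) (lsub (gm g) f) = f
      rw [lsub_gg, mul_inv_cancel, lsub_g1])

/-- swapping element sending y to x - c y -/
noncomputable def sw (c : F) : GL (Fin 2) F := mk2 0 1 1 (-c) (by simp)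

lemma lsub_sw_y (c : F) : lsub (gm (sw c)) (yv F) = xv F - MvPolynomial.C c * yv F := by
  rw [lsub_X, sw, gm_mk2]; simp [sub_eq_add_neg]

lemma prime_lin (c : F) : Prime (xv F - MvPolynomial.C c * yv F) := by
  have h : Prime (yv F) := MvPolynomial.X_prime
  rw [← lsub_sw_y]
  exact (MulEquiv.prime_iff (lsubE (sw c))).2 h

lemma prod_lin_aux {K : Type*} [Field K] (r : ℕ) (X Y : K) (hY : Y ≠ 0) :
    Y ^ (r + 1) * (X ^ (r + 1) / Y ^ (r + 1) - X / Y) = X ^ (r + 1) - X * Y ^ r := by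
  field_simp
  ring

lemma prod_lin : ∏ c : F, (xv F - MvPolynomial.C c * yv F) =
    xv F ^ Fintype.card F - xv F * yv F ^ (Fintype.card F - 1) := by
  have hq1 : 1 < Fintype.card F := card_gt
  obtain ⟨r, hr⟩ : ∃ r, Fintype.card F = r + 1 := ⟨Fintype.card F - 1, by omega⟩
  have hp : (Polynomial.X ^ Fintype.card F - Polynomial.X : Polynomial F) = ∏ c : F, (Polynomial.X - Polynomial.C c) := by
    have : ((Finset.univ : Finset F).val.map fun a => Polynomial.X - Polynomial.C a).prod = (Polynomial.X ^ Fintype.card F - Polynomial.X : Polynomial F) := by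
      rw [← FiniteField.roots_X_pow_card_sub_X F, Polynomial.prod_multiset_X_sub_C_of_monic_of_roots_card_eq]
      · exact Polynomial.monic_X_pow_sub (by rw [Polynomial.degree_X]; exact_mod_cast hq1)
      · rw [FiniteField.roots_X_pow_card_sub_X, FiniteField.X_pow_card_sub_X_natDegree_eq F hq1]; simp
    exact this.symm
  let K := FractionRing (SS F)
  let i := algebraMap (SS F) K
  have hi : Function.Injective i := IsFractionRing.injective (SS F) K
  apply hi
  have hy : i (yv F) ≠ 0 := by
    rw [Ne, map_eq_zero_iff i hi]; exact MvPolynomial.X_ne_zero _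
  have h2 := congrArg (Polynomial.eval₂ (i.comp (MvPolynomial.C)) (i (xv F) / i (yv F))) hp
  simp only [Polynomial.eval₂_sub, Polynomial.eval₂_X_pow, Polynomial.eval₂_X, Polynomial.eval₂_finsetProd, Polynomial.eval₂_C, RingHom.comp_apply] at h2
  have h3 : ∏ c : F, i (xv F - MvPolynomial.C c * yv F) = ∏ c : F, (i (yv F) * (i (xv F) / i (yv F) - i (MvPolynomial.C c))) := by
    apply Finset.prod_congr rfl
    intro c _
    rw [map_sub, map_mul, mul_sub, mul_div_cancel₀ _ hy]; ring
  rw [map_prod, h3, Finset.prod_mul_distrib, ← h2, Finset.prod_const, Finset.card_univ, map_sub, map_mul, map_pow, map_pow, hr, Nat.add_sub_cancel, div_pow]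
  exact prod_lin_aux _ _ _ hy

lemma LL_dvd {n : ℕ} {f : SS F} (hf : f ∈ PInv (⊤ : Subgroup (GL (Fin 2) F)) n)
    (hy : yv F ∣ f) : LL F 1 ^ (Fintype.card F - 1) ∣ f := by
  have h1 := ypow_dvd le_top hf hy
  have h2 : ∀ c : F, (xv F - MvPolynomial.C c * yv F) ^ (Fintype.card F - 1) ∣ f := by
    intro c
    rw [← lsub_sw_y, ← map_pow, ← hf.2 (sw c) trivial]
    exact map_dvd _ h1
  rw [LL_eq, ← prod_lin, mul_pow, ← Finset.prod_pow]
  have hny : ∀ c : F, ¬ (xv F - MvPolynomial.C c * yv F) ∣ yv F := by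
    rintro c ⟨k, hk⟩
    have := congrArg (MvPolynomial.eval ![c, 1]) hk
    simp at this
  apply IsRelPrime.mul_dvd
  · apply IsRelPrime.prod_right
    intro c _
    apply IsRelPrime.pow
    exact ((prime_lin c).irreducible.isRelPrime_iff_not_dvd.2 (hny c)).symm
  · exact h1
  · apply Finset.prod_dvd_of_isRelPrime
    · intro c _ c' _ hcc
      apply IsRelPrime.pow
      rw [(prime_lin c).irreducible.isRelPrime_iff_not_dvd]
      rintro ⟨k, hk⟩
      have := congrArg (MvPolynomial.eval ![c, 1]) hk
      simp [sub_eq_zero] at this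
      exact hcc this
    · intro c _
      exact h2 c

lemma y_dvd_Tr {H : Subgroup (GL (Fin 2) F)} [Fintype H] (hH : BB F ≤ H) {n : ℕ} {f : SS F} (hf : f.IsHomogeneous n) :
    yv F ∣ Tr H f := by
  classical
  rw [y_dvd_iff (Tr_hom H hf), Tr_apply, map_sum]
  obtain ⟨p, hp⟩ := CharP.exists F
  have : Fact p.Prime := ⟨CharP.char_is_prime F p⟩
  let u : H := ⟨up 1, hH (up_mem 1)⟩
  have hu : ∀ j : ℕ, (up (1 : F)) ^ j = up (j : F) := by
    intro j
    induction j with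
    | zero =>
      apply Units.ext
      change (1 : Matrix (Fin 2) (Fin 2) F) = !![1, ((0 : ℕ) : F); 0, 1]
      rw [Nat.cast_zero, ← Matrix.one_fin_two]
    | succ k ih =>
      rw [pow_succ, ih]
      apply Units.ext
      change !![1, (k : F); 0, 1] * !![1, (1 : F); 0, 1] = !![1, ((k + 1 : ℕ) : F); 0, 1]
      simp [Matrix.mul_fin_two, add_comm]
  have hord : orderOf u = p := by
    apply orderOf_eq_prime
    · apply Subtype.ext
      change up (1 : F) ^ p = 1
      rw [hu, CharP.cast_eq_zero, ← Nat.cast_zero, ← hu 0, pow_zero]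
    · intro h
      have h1 : up (1 : F) = 1 := congrArg Subtype.val h
      have h2 : gm (up (1 : F)) 0 1 = 0 := by rw [h1]; simp
      rw [up, gm_mk2] at h2
      simp at h2
  let hh : H → F := fun g => ev10 F (lsub (gm g.1) f)
  have hev : ∀ P : SS F, ev10 F (lsub (gm (up 1)) P) = ev10 F P := by
    intro P
    have : (ev10 F).comp (lsub (gm (up 1))) = ev10 F := by
      apply MvPolynomial.algHom_ext
      intro i
      fin_cases i
      · simp [lsub_up_x, ev10]
      · simp [lsub_up_y, ev10]
    exact DFunLike.congr_fun this P
  have hinv : ∀ g, hh (g * u) = hh g := by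
    intro g
    change ev10 F (lsub (gm (g.1 * up 1)) f) = ev10 F (lsub (gm g.1) f)
    rw [← lsub_gg, hev]
  have hinvp : ∀ j : ℕ, ∀ g, hh (g * u ^ j) = hh g := by
    intro j
    induction j with
    | zero => intro g; simp
    | succ k ih => intro g; rw [pow_succ, ← mul_assoc, hinv, ih]
  let K := Subgroup.zpowers u
  have hK : ∀ k ∈ K, ∀ g, hh (g * k) = hh g := by
    intro k hk g
    obtain ⟨j, rfl⟩ := mem_powers_iff_mem_zpowers.2 hk
    exact hinvp j g
  have hsum : ∑ g : H, hh g = ∑ z : (H ⧸ K) × K, hh (z.1.out * z.2) := by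
    symm
    apply Fintype.sum_bijective (fun z : (H ⧸ K) × K => z.1.out * (z.2 : H))
    · constructor
      · rintro ⟨a, k⟩ ⟨b, l⟩ h
        dsimp only at h
        have hab : a = b := by
          have := congrArg (QuotientGroup.mk (s := K)) h
          rwa [QuotientGroup.mk_mul_of_mem _ k.2, QuotientGroup.mk_mul_of_mem _ l.2, QuotientGroup.out_eq', QuotientGroup.out_eq'] at this
        subst hab
        have := mul_left_cancel h
        rw [Subtype.ext this]
      · intro g
        obtain ⟨k, hk⟩ := QuotientGroup.mk_out_eq_mul K g
        refine ⟨⟨QuotientGroup.mk g, k⁻¹⟩, ?_⟩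
        dsimp only
        rw [hk]; simp
    · intro _; rfl
  change ∑ g : H, hh g = 0
  rw [hsum, Fintype.sum_prod_type]
  apply Finset.sum_eq_zero
  intro a _
  dsimp only
  rw [Finset.sum_congr rfl (fun k _ => hK k.1 k.2 _), Finset.sum_const, Finset.card_univ]
  have : Fintype.card K = p := by rw [Fintype.card_zpowers, hord]
  rw [this, nsmul_eq_mul, CharP.cast_eq_zero, zero_mul]

end Dickson


section TraceComp
variable {F : Type} [Field F] [Fintype F]

lemma sum_GL [DecidableEq F] (H : Subgroup (GL (Fin 2) F)) [Fintype H] (P : F → Prop) [DecidablePred P]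
    (hP : ∀ g, g ∈ H ↔ P (gm g 1 0)) (h : Matrix (Fin 2) (Fin 2) F → F) :
    ∑ g : H, h (gm g.1) = ∑ a : F, ∑ b : F, ∑ c : F, ∑ d : F,
      if (a * d - b * c ≠ 0 ∧ P c) then h !![a, b; c, d] else 0 := by
  have h1 : (∑ a : F, ∑ b : F, ∑ c : F, ∑ d : F,
      if (a * d - b * c ≠ 0 ∧ P c) then h !![a, b; c, d] else 0) =
      ∑ z : F × F × F × F, if (z.1 * z.2.2.2 - z.2.1 * z.2.2.1 ≠ 0 ∧ P z.2.2.1) then h !![z.1, z.2.1; z.2.2.1, z.2.2.2] else 0 := by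
    simp only [Fintype.sum_prod_type]
  rw [h1, ← Finset.sum_filter]
  refine Finset.sum_bij (fun g _ => (gm g.1 0 0, gm g.1 0 1, gm g.1 1 0, gm g.1 1 1)) ?_ ?_ ?_ ?_
  · intro g _
    rw [Finset.mem_filter]
    exact ⟨Finset.mem_univ _, gm_det g.1, (hP g.1).1 g.2⟩
  · intro g _ g' _ hgg
    simp only [Prod.mk.injEq] at hgg
    apply Subtype.ext
    apply Units.ext
    change gm g.1 = gm g'.1
    rw [Matrix.eta_fin_two (gm g.1), Matrix.eta_fin_two (gm g'.1), hgg.1, hgg.2.1, hgg.2.2.1, hgg.2.2.2]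
  · rintro ⟨a, b, c, d⟩ hz
    rw [Finset.mem_filter] at hz
    refine ⟨⟨mk2 a b c d hz.2.1, (hP _).2 hz.2.2⟩, Finset.mem_univ _, ?_⟩
    simp [gm_mk2]
  · intro g _
    rw [Matrix.eta_fin_two (gm g.1)]
    simp

lemma pow_ind [DecidableEq F] (x : F) : x ^ (Fintype.card F - 1) = if x ≠ 0 then 1 else 0 := by
  split_ifs with h
  · exact FiniteField.pow_card_sub_one_eq_one x h
  · rw [not_not] at h
    have : 1 < Fintype.card F := card_gt
    rw [h, zero_pow (by omega)]

lemma sum_pow_top : ∑ x : F, x ^ (Fintype.card F - 1) = -1 := by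
  classical
  have : ∀ x : F, x ^ (Fintype.card F - 1) = 1 - if x = 0 then 1 else 0 := by
    intro x
    rw [pow_ind]
    by_cases h : x = 0 <;> simp [h]
  simp only [this, Finset.sum_sub_distrib, Finset.sum_ite_eq', Finset.mem_univ, if_true]
  simp

lemma coeff_lt (a b i j : ℕ) (f : SS F) (h : i < a ∨ j < b) : MvPolynomial.coeff (ex i j) (mo F a b * f) = 0 := by
  rw [mo_eq, MvPolynomial.coeff_monomial_mul', if_neg]
  intro hle
  have h0 := hle 0
  have h1 := hle 1
  rw [ex_zero, ex_zero] at h0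
  rw [ex_one, ex_one] at h1
  omega

lemma Tr_const {H : Subgroup (GL (Fin 2) F)} [Fintype H] {d0 θ : SS F} {δ : ℕ}
    (hd0 : d0 ∈ PInv H δ) (h0 : d0 ≠ 0) (hθ : θ.IsHomogeneous δ)
    (hdvd : ∀ f, ∀ n, f.IsHomogeneous n → d0 ∣ Tr H f) (hne : Tr H θ ≠ 0) :
    ∃ c : F, c ≠ 0 ∧ Tr H θ = c • d0 := by
  rcases quot_inv hd0 h0 (Tr_mem H hθ) (hdvd _ _ hθ) with ⟨h, _⟩ | ⟨_, h, hh, he⟩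
  · omega
  · rw [Nat.sub_self] at hh
    have e := hom_eq_sum hh.1
    simp only [zero_add, Finset.sum_range_one, Nat.sub_self] at e
    have e2 : Tr H θ = MvPolynomial.coeff (ex 0 0) h • d0 := by
      rw [he]
      conv_lhs => rw [e]
      simp [mo]
    refine ⟨_, ?_, e2⟩
    intro hc
    rw [hc, zero_smul] at e2
    exact hne e2

lemma TrB_ne [Fintype (BB F)] : Tr (BB F) (xv F ^ (Fintype.card F - 1)) ≠ 0 := by
  classical
  intro h
  have h1 := congrArg (MvPolynomial.aeval ![(0 : F), 1]) h
  rw [Tr_apply, map_sum, map_zero] at h1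
  have h2 : ∀ g : GL (Fin 2) F, MvPolynomial.aeval ![(0 : F), 1] (lsub (gm g) (xv F ^ (Fintype.card F - 1))) =
      (gm g 0 1) ^ (Fintype.card F - 1) := by
    intro g
    rw [map_pow, lsub_X]; simp
  simp only [h2] at h1
  rw [sum_GL (BB F) (fun c => c = 0) (fun g => mem_BB) (fun M => M 0 1 ^ (Fintype.card F - 1))] at h1
  have h3 : ∀ a b : F, (∑ c : F, ∑ d : F, if (a * d - b * c ≠ 0 ∧ c = 0) then
      (!![a, b; c, d] : Matrix (Fin 2) (Fin 2) F) 0 1 ^ (Fintype.card F - 1) else 0) =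
      a ^ (Fintype.card F - 1) * b ^ (Fintype.card F - 1) * ∑ d : F, d ^ (Fintype.card F - 1) := by
    intro a b
    rw [Finset.sum_eq_single 0, Finset.mul_sum]
    · apply Finset.sum_congr rfl
      intro d _
      rw [pow_ind a, pow_ind d]
      by_cases ha : a = 0 <;> by_cases hd : d = 0 <;> simp [ha, hd]
    · intro c _ hc
      simp [hc]
    · simp
  simp only [h3, ← Finset.sum_mul, ← Finset.mul_sum, sum_pow_top] at h1
  norm_num at h1

lemma TrG_ne [Fintype (⊤ : Subgroup (GL (Fin 2) F))] :
    Tr (⊤ : Subgroup (GL (Fin 2) F)) (mo F (Fintype.card F - 1) (Fintype.card F * (Fintype.card F - 1))) ≠ 0 := by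
  classical
  intro h
  have hq1 : 1 < Fintype.card F := card_gt
  have h1 := congrArg (MvPolynomial.lcoeff F (ex (Fintype.card F - 1) (Fintype.card F * (Fintype.card F - 1)))) h
  rw [Tr_apply, map_sum, map_zero] at h1
  have h2 : ∀ g : GL (Fin 2) F, MvPolynomial.lcoeff F (ex (Fintype.card F - 1) (Fintype.card F * (Fintype.card F - 1))) (lsub (gm g) (mo F (Fintype.card F - 1) (Fintype.card F * (Fintype.card F - 1)))) =
      (gm g 0 0) ^ (Fintype.card F - 1) * (gm g 1 1) ^ (Fintype.card F - 1) := by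
    intro g
    rw [mo, map_mul, map_pow, pow_mul, map_pow, map_pow, lsub_X, lsub_X]
    have hf := frob_lin (F := F) 1 (gm g 1 0) (gm g 1 1) (xv F) (yv F)
    rw [pow_one] at hf
    rw [hf]
    set a := gm g 0 0
    set b := gm g 0 1
    set c := gm g 1 0
    set d := gm g 1 1
    set r := Fintype.card F - 1
    obtain ⟨R1, hR1⟩ := sub_dvd_pow_sub_pow (MvPolynomial.C a * xv F + MvPolynomial.C b * yv F) (MvPolynomial.C a * xv F) r
    obtain ⟨R2, hR2⟩ := sub_dvd_pow_sub_pow (MvPolynomial.C c * xv F ^ Fintype.card F + MvPolynomial.C d * yv F ^ Fintype.card F) (MvPolynomial.C d * yv F ^ Fintype.card F) r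
    rw [add_sub_cancel_left, sub_eq_iff_eq_add] at hR1
    rw [add_sub_cancel_right, sub_eq_iff_eq_add] at hR2
    rw [hR1, hR2]
    have e : (MvPolynomial.C b * yv F * R1 + (MvPolynomial.C a * xv F) ^ r) *
        (MvPolynomial.C c * xv F ^ Fintype.card F * R2 + (MvPolynomial.C d * yv F ^ Fintype.card F) ^ r) =
        (a ^ r * d ^ r) • mo F r (Fintype.card F * r) +
          (mo F (Fintype.card F) 0 * ((MvPolynomial.C b * yv F * R1 + (MvPolynomial.C a * xv F) ^ r) * MvPolynomial.C c * R2) +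
          mo F 0 (Fintype.card F * r + 1) * (MvPolynomial.C b * R1 * MvPolynomial.C d ^ r)) := by
      rw [MvPolynomial.smul_eq_C_mul, map_mul, map_pow, map_pow, mo, mo, mo]
      ring
    rw [e, map_add, map_add, map_smul, MvPolynomial.lcoeff_apply, MvPolynomial.lcoeff_apply, MvPolynomial.lcoeff_apply,
      coeff_lt _ _ _ _ _ (Or.inl (by omega)), coeff_lt _ _ _ _ _ (Or.inr (by omega)), coeff_mo]
    simp
  simp only [h2] at h1
  rw [sum_GL (⊤ : Subgroup (GL (Fin 2) F)) (fun c => True) (fun g => by simp)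
    (fun M => M 0 0 ^ (Fintype.card F - 1) * M 1 1 ^ (Fintype.card F - 1))] at h1
  have h3 : ∀ a b c d : F, (if (a * d - b * c ≠ 0 ∧ True) then
      (!![a, b; c, d] : Matrix (Fin 2) (Fin 2) F) 0 0 ^ (Fintype.card F - 1) * (!![a, b; c, d] : Matrix (Fin 2) (Fin 2) F) 1 1 ^ (Fintype.card F - 1) else 0) =
      a ^ (Fintype.card F - 1) * (d ^ (Fintype.card F - 1) * (a * d - b * c) ^ (Fintype.card F - 1)) := by
    intro a b c d
    rw [pow_ind (a * d - b * c)]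
    split_ifs <;> simp_all
  have h4 : ∀ s : F, ∑ b : F, ∑ c : F, (s - b * c) ^ (Fintype.card F - 1) = 1 := by
    intro s
    have : ∀ b : F, ∑ c : F, (s - b * c) ^ (Fintype.card F - 1) = - b ^ (Fintype.card F - 1) := by
      intro b
      by_cases hb : b = 0
      · subst hb
        rw [zero_pow (by omega)]
        simp
      · rw [FiniteField.pow_card_sub_one_eq_one b hb, ← sum_pow_top (F := F)]
        apply Fintype.sum_bijective (fun c => s - b * c)
        · refine ⟨fun c c' hcc => ?_, fun y => ⟨(s - y) / b, ?_⟩⟩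
          · have : b * c = b * c' := by simpa using hcc
            exact mul_left_cancel₀ hb this
          · field_simp; ring
        · intro _; rfl
    simp only [this, Finset.sum_neg_distrib, sum_pow_top, neg_neg]
  simp only [h3] at h1
  have h5 : ∀ a : F, (∑ b : F, ∑ c : F, ∑ d : F, a ^ (Fintype.card F - 1) * (d ^ (Fintype.card F - 1) * (a * d - b * c) ^ (Fintype.card F - 1))) =
     a ^ (Fintype.card F - 1) * ∑ d : F, d ^ (Fintype.card F - 1) * ∑ b : F, ∑ c : F, (a * d - b * c) ^ (Fintype.card F - 1) := by
    intro a
    simp only [← Finset.mul_sum]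
    congr 1
    rw [Finset.sum_congr rfl (fun b _ => Finset.sum_comm), Finset.sum_comm]
    simp only [Finset.mul_sum]
  simp only [h5, h4, mul_one, sum_pow_top] at h1
  rw [← Finset.sum_mul, sum_pow_top] at h1
  norm_num at h1

/-- summary for Borel -/
theorem PInvB_rec (n : ℕ) : Module.finrank F (PInv (BB F) n) =
    (if Fintype.card F * (Fintype.card F - 1) ∣ n then 1 else 0) +
      if Fintype.card F - 1 ≤ n then Module.finrank F (PInv (BB F) (n - (Fintype.card F - 1))) else 0 := by
  have hq1 : 1 < Fintype.card F := card_gt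
  exact finrank_PInv y_mem (pow_ne_zero _ (MvPolynomial.X_ne_zero _)) (d1_mem _) (dvd_pow_self _ (by omega)) d1_ev
    (fun n f hf hy => ypow_dvd le_rfl hf hy) (fun n f hf h => lead_dvd le_rfl hf h) n

theorem PInvG_rec (n : ℕ) : Module.finrank F (PInv (⊤ : Subgroup (GL (Fin 2) F)) n) =
    (if Fintype.card F * (Fintype.card F - 1) ∣ n then 1 else 0) +
      if (Fintype.card F + 1) * (Fintype.card F - 1) ≤ n then
        Module.finrank F (PInv (⊤ : Subgroup (GL (Fin 2) F)) (n - (Fintype.card F + 1) * (Fintype.card F - 1))) else 0 := by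
  have hq1 : 1 < Fintype.card F := card_gt
  refine finrank_PInv (LL_mem _) (pow_ne_zero _ (LL_ne 0)) (d1_mem _) (Dvd.dvd.trans ?_ (dvd_pow_self _ (by omega))) d1_ev
    (fun n f hf hy => LL_dvd hf hy) (fun n f hf h => lead_dvd le_top hf h) n
  rw [LL_eq]; exact dvd_mul_right _ _

theorem DInvB_rec (k : ℕ) : Module.finrank F (DInv (BB F) k) = Module.finrank F (KInv (BB F) (yv F ^ (Fintype.card F - 1)) k) +
      if 2 * (Fintype.card F - 1) ≤ k then Module.finrank F (PInv (BB F) (k - 2 * (Fintype.card F - 1))) else 0 := by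
  classical
  have : Fintype (BB F) := Fintype.ofFinite _
  have hd : ∀ f : SS F, ∀ n, f.IsHomogeneous n → yv F ^ (Fintype.card F - 1) ∣ Tr (BB F) f :=
    fun f n hf => ypow_dvd le_rfl (Tr_mem _ hf) (y_dvd_Tr le_rfl hf)
  have h0 : yv F ^ (Fintype.card F - 1) ≠ 0 := pow_ne_zero _ (MvPolynomial.X_ne_zero _)
  have hθ : (xv F ^ (Fintype.card F - 1)).IsHomogeneous (Fintype.card F - 1) := MvPolynomial.isHomogeneous_X_pow _ _
  obtain ⟨c, hc, he⟩ := Tr_const y_mem h0 hθ hd TrB_ne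
  exact finrank_DInv y_mem h0 hθ hc he hd k

theorem DInvG_rec (k : ℕ) : Module.finrank F (DInv (⊤ : Subgroup (GL (Fin 2) F)) k) =
    Module.finrank F (KInv (⊤ : Subgroup (GL (Fin 2) F)) (LL F 1 ^ (Fintype.card F - 1)) k) +
      if 2 * ((Fintype.card F + 1) * (Fintype.card F - 1)) ≤ k then
        Module.finrank F (PInv (⊤ : Subgroup (GL (Fin 2) F)) (k - 2 * ((Fintype.card F + 1) * (Fintype.card F - 1)))) else 0 := by
  classical
  have : Fintype (⊤ : Subgroup (GL (Fin 2) F)) := Fintype.ofFinite _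
  have hd : ∀ f : SS F, ∀ n, f.IsHomogeneous n → LL F 1 ^ (Fintype.card F - 1) ∣ Tr (⊤ : Subgroup (GL (Fin 2) F)) f :=
    fun f n hf => LL_dvd (Tr_mem _ hf) (y_dvd_Tr le_top hf)
  have h0 : LL F 1 ^ (Fintype.card F - 1) ≠ 0 := pow_ne_zero _ (LL_ne 0)
  have hθ : (mo F (Fintype.card F - 1) (Fintype.card F * (Fintype.card F - 1))).IsHomogeneous ((Fintype.card F + 1) * (Fintype.card F - 1)) :=
    mo_hom' (by ring)
  obtain ⟨c, hc, he⟩ := Tr_const (LL_mem _) h0 hθ hd TrG_ne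
  exact finrank_DInv (LL_mem _) h0 hθ hc he hd k

end TraceComp


section KRanks0
variable {F : Type} [Field F]

lemma finrank_one_of (K : Submodule F (SS F →ₗ[F] F)) (v : SS F) (inj : ∀ φ ∈ K, φ v = 0 → φ = 0)
    (φ0 : SS F →ₗ[F] F) (h0 : φ0 ∈ K) (hv : φ0 v ≠ 0) : Module.finrank F K = 1 := by
  rw [finrank_eq_one_iff_of_nonzero' (⟨φ0, h0⟩ : K)]
  · rintro ⟨w, hw⟩
    refine ⟨w v / φ0 v, Subtype.ext ?_⟩
    have := inj (w - (w v / φ0 v) • φ0) (K.sub_mem hw (K.smul_mem _ h0)) (by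
      simp [hv])
    exact (sub_eq_zero.1 this).symm
  · intro h
    have : φ0 = 0 := congrArg Subtype.val h
    rw [this] at hv
    simp at hv

lemma finrank_zero_of (K : Submodule F (SS F →ₗ[F] F)) (h : ∀ φ ∈ K, φ = 0) : Module.finrank F K = 0 := by
  have : K = ⊥ := by
    rw [eq_bot_iff]; intro φ hφ; exact (Submodule.mem_bot F).2 (h φ hφ)
  rw [this]; exact finrank_bot F _

end KRanks0

section KRanks
variable {F : Type} [Field F] [Fintype F]

/-- weights of functionals -/
lemma wt_gen {H : Subgroup (GL (Fin 2) F)} {k : ℕ} {φ : SS F →ₗ[F] F} (hφ : φ ∈ DInv H k)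
    {f : SS F} {a b : ℕ} (hH : BB F ≤ H)
    (hf : ∀ s t : Fˣ, lsub (gm (dg s t)) f = ((s : F) ^ a * (t : F) ^ b) • f) (hne : φ f ≠ 0) :
    Fintype.card F - 1 ∣ a ∧ Fintype.card F - 1 ∣ b := by
  have key : ∀ s t : Fˣ, (s : F) ^ a * (t : F) ^ b = 1 := by
    intro s t
    have := hφ.2 _ (hH (dg_mem s t)) f
    change φ (lsub (gm (dg s t)) f) = φ f at this
    rw [hf, map_smul, smul_eq_mul] at this
    exact mul_right_cancel₀ hne (this.trans (one_mul _).symm)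
  constructor
  · rw [← FiniteField.forall_pow_eq_one_iff]
    intro s
    have := key s 1
    ext; simpa using this
  · rw [← FiniteField.forall_pow_eq_one_iff]
    intro s
    have := key 1 s
    ext; simpa using this

lemma wt_mo {H : Subgroup (GL (Fin 2) F)} {k : ℕ} {φ : SS F →ₗ[F] F} (hφ : φ ∈ DInv H k)
    {a b : ℕ} (hH : BB F ≤ H) (hne : φ (mo F a b) ≠ 0) :
    Fintype.card F - 1 ∣ a ∧ Fintype.card F - 1 ∣ b :=
  wt_gen hφ hH (fun s t => lsub_dg_mo s t a b) hne

lemma DInv_zero_of {H : Subgroup (GL (Fin 2) F)} {k : ℕ} (hH : BB F ≤ H) (hk : ¬ Fintype.card F - 1 ∣ k)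
    {φ : SS F →ₗ[F] F} (hφ : φ ∈ DInv H k) : φ = 0 := by
  apply dual_ext
  intro a b
  by_contra hne
  have hne : φ (mo F a b) ≠ 0 := hne
  have hab : a + b = k := by
    by_contra h
    exact hne (hφ.1 a b h)
  have := wt_mo hφ hH hne
  exact hk (hab ▸ Nat.dvd_add this.1 this.2)

theorem KInvB (k : ℕ) : Module.finrank F (KInv (BB F) (yv F ^ (Fintype.card F - 1)) k) =
    if Fintype.card F - 1 ∣ k then 1 else 0 := by
  have hq1 : 1 < Fintype.card F := card_gt
  split_ifs with hk
  · have inj : ∀ φ ∈ KInv (BB F) (yv F ^ (Fintype.card F - 1)) k, φ (mo F k 0) = 0 → φ = 0 := by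
      intro φ hφ h0
      apply dual_ext
      intro a b
      by_contra hne
      have hne : φ (mo F a b) ≠ 0 := hne
      have hab : a + b = k := by
        by_contra h
        exact hne (hφ.1.1 a b h)
      have hw := wt_mo hφ.1 le_rfl hne
      by_cases hb : b = 0
      · subst hb
        have : a = k := by omega
        subst this
        exact hne h0
      · have hle := Nat.le_of_dvd (by omega) hw.2
        apply hne
        have : mo F a b = yv F ^ (Fintype.card F - 1) * mo F a (b - (Fintype.card F - 1)) := by
          conv_lhs => rw [← Nat.add_sub_cancel' hle]
          simp only [mo]; ring
        rw [this, hφ.2]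
    refine finrank_one_of _ (mo F k 0) inj ((ev10 F).toLinearMap.comp (MvPolynomial.homogeneousComponent k)) ?_ ?_
    · refine ⟨⟨?_, ?_⟩, ?_⟩
      · intro a b hab
        rw [LinearMap.comp_apply, MvPolynomial.homogeneousComponent_of_mem ((MvPolynomial.mem_homogeneousSubmodule _ _).2 (mo_hom a b)),
          if_neg (by omega), map_zero]
      · intro g hg f
        rw [mem_BB] at hg
        simp only [LinearMap.comp_apply]
        rw [lsub_hc]
        have hdet := gm_det g
        rw [hg] at hdet
        have ha : gm g 0 0 ≠ 0 := by rintro h; simp [h] at hdet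
        have h1 := MvPolynomial.homogeneousComponent_isHomogeneous k f
        set P := MvPolynomial.homogeneousComponent k f
        change ev10 F (lsub (gm g) P) = ev10 F P
        rw [hom_eq_sum h1, map_sum, map_sum, map_sum]
        apply Finset.sum_congr rfl
        intro i hi
        rw [Finset.mem_range] at hi
        rw [map_smul, map_smul, map_smul, ev10_mo, mo, map_mul, map_pow, map_pow]
        have e0 := lsub_X (gm g) 0
        have e1 := lsub_X (gm g) 1
        rw [hg] at e1
        rw [e0, e1]
        congr 1
        by_cases hik : k - i = 0
        · have : i = k := by omega
          subst this
          obtain ⟨r, hr⟩ := hk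
          simp [ev10, hr, pow_mul, FiniteField.pow_card_sub_one_eq_one _ ha]
        · simp [ev10, hik]
      · intro f
        rw [LinearMap.comp_apply]
        have hy : (yv F ^ (Fintype.card F - 1)).IsHomogeneous (Fintype.card F - 1) := MvPolynomial.isHomogeneous_X_pow _ _
        by_cases hlt : k < Fintype.card F - 1
        · rw [hc_mul_lt hy k hlt, map_zero]
        · have := hc_mul hy (h := f) (k - (Fintype.card F - 1))
          rw [Nat.sub_add_cancel (by omega)] at this
          rw [this]
          simp [ev10]
          left; omega
    · rw [LinearMap.comp_apply, MvPolynomial.homogeneousComponent_of_mem ((MvPolynomial.mem_homogeneousSubmodule _ _).2 (mo_hom k 0)), if_pos (by omega)]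
      simp [ev10_mo]
  · exact finrank_zero_of _ fun φ hφ => DInv_zero_of le_rfl hk hφ.1

lemma choose_ne (i : ℕ) : i ≤ Fintype.card F - 1 → ((Fintype.card F - 1).choose i : F) ≠ 0 := by
  have hq1 : 1 < Fintype.card F := card_gt
  induction i with
  | zero => simp
  | succ i ih =>
    intro hi h
    obtain ⟨p, hcp, n, hp, hc⟩ := FiniteField.card' F
    have hd : p ∣ (Fintype.card F).choose (i + 1) := by
      rw [hc]
      apply hp.dvd_choose_pow <;> omega
    have h0 : ((Fintype.card F).choose (i + 1) : F) = 0 := by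
      rw [CharP.cast_eq_zero_iff F p]; exact hd
    have hs : (Fintype.card F).choose (i + 1) = (Fintype.card F - 1).choose i + (Fintype.card F - 1).choose (i + 1) := by
      conv_lhs => rw [← Nat.sub_add_cancel hq1.le]
      rw [Nat.choose_succ_succ]
    rw [hs, Nat.cast_add, h, add_zero] at h0
    exact ih (by omega) h0

/-- x^q - x y^(q-1) -/
noncomputable def DD (F : Type) [Field F] [Fintype F] : SS F :=
  xv F ^ Fintype.card F - xv F * yv F ^ (Fintype.card F - 1)

lemma DD_dg (s t : Fˣ) : lsub (gm (dg s t)) (DD F) = MvPolynomial.C (s : F) * DD F := by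
  rw [DD, map_sub, map_mul, map_pow, map_pow, lsub_dg_x, lsub_dg_y, mul_pow, mul_pow, ← map_pow, ← map_pow,
    FiniteField.pow_card, FiniteField.pow_card_sub_one_eq_one _ t.ne_zero]
  simp; ring

lemma DD_up : lsub (gm (up 1)) (DD F) = DD F := by
  have hq1 : 1 < Fintype.card F := card_gt
  obtain ⟨r, hr⟩ : ∃ r, Fintype.card F = r + 1 := ⟨Fintype.card F - 1, by omega⟩
  rw [DD, map_sub, map_mul, map_pow, map_pow, lsub_up_x, lsub_up_y, map_one, one_mul, frob_add (F := F), hr, Nat.add_sub_cancel]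
  ring

lemma LL_DD : LL F 1 = yv F * DD F := LL_eq

lemma wt_D {H : Subgroup (GL (Fin 2) F)} {k : ℕ} {φ : SS F →ₗ[F] F} (hφ : φ ∈ DInv H k)
    {j a b : ℕ} (hH : BB F ≤ H) (hne : φ (DD F ^ j * mo F a b) ≠ 0) :
    Fintype.card F - 1 ∣ j + a ∧ Fintype.card F - 1 ∣ b := by
  refine wt_gen hφ hH (fun s t => ?_) hne
  rw [map_mul, map_pow, DD_dg, lsub_dg_mo, MvPolynomial.smul_eq_C_mul, MvPolynomial.smul_eq_C_mul]
  simp only [map_mul, map_pow, pow_add]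
  ring

lemma stepA {H : Subgroup (GL (Fin 2) F)} {k : ℕ} {φ : SS F →ₗ[F] F} (hφ : φ ∈ DInv H k)
    (hH : BB F ≤ H) (j i e : ℕ) (hi : i < Fintype.card F - 1) :
    φ (DD F ^ j * mo F i (Fintype.card F - 1 - i + e)) = 0 := by
  have hq1 : 1 < Fintype.card F := card_gt
  by_contra hne
  have hw := (wt_D hφ hH hne).1
  have h1 := hφ.2 _ (hH (up_mem 1)) (DD F ^ j * mo F (Fintype.card F - 1) e)
  change φ (lsub (gm (up 1)) _) = _ at h1
  have e0 : lsub (gm (up 1)) (DD F ^ j * mo F (Fintype.card F - 1) e) =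
      DD F ^ j * ((xv F + yv F) ^ (Fintype.card F - 1) * yv F ^ e) := by
    rw [map_mul, map_pow, DD_up, mo, map_mul, map_pow, map_pow, lsub_up_x, lsub_up_y, map_one, one_mul]
  rw [e0, add_pow, Finset.sum_range_succ, mo] at h1
  simp only [Nat.sub_self, pow_zero, mul_one, Nat.choose_self, Nat.cast_one, add_mul, mul_add, map_add, add_eq_right] at h1
  rw [Finset.sum_mul, Finset.mul_sum, map_sum, Finset.sum_eq_single i] at h1
  · have : DD F ^ j * (xv F ^ i * yv F ^ (Fintype.card F - 1 - i) * ((Fintype.card F - 1).choose i : SS F) * yv F ^ e) =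
        ((Fintype.card F - 1).choose i : F) • (DD F ^ j * mo F i (Fintype.card F - 1 - i + e)) := by
      rw [MvPolynomial.smul_eq_C_mul, map_natCast, mo]; ring
    rw [this, map_smul, smul_eq_mul] at h1
    exact (mul_ne_zero (choose_ne i hi.le) hne) h1
  · intro i' hi' hii
    rw [Finset.mem_range] at hi'
    have : DD F ^ j * (xv F ^ i' * yv F ^ (Fintype.card F - 1 - i') * ((Fintype.card F - 1).choose i' : SS F) * yv F ^ e) =
        ((Fintype.card F - 1).choose i' : F) • (DD F ^ j * mo F i' (Fintype.card F - 1 - i' + e)) := by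
      rw [MvPolynomial.smul_eq_C_mul, map_natCast, mo]; ring
    rw [this, map_smul, smul_eq_mul]
    by_contra hne'
    have hw' := (wt_D hφ hH (right_ne_zero_of_mul hne')).1
    have h5 : (j + i) ≡ (j + i') [MOD Fintype.card F - 1] := by
      rw [Nat.ModEq, Nat.mod_eq_zero_of_dvd hw, Nat.mod_eq_zero_of_dvd hw']
    have h6 := Nat.ModEq.add_left_cancel' j h5
    rw [Nat.ModEq, Nat.mod_eq_of_lt hi, Nat.mod_eq_of_lt hi'] at h6
    exact hii h6.symm
  · intro h
    exact absurd (Finset.mem_range.2 hi) h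

lemma stepB (φ : SS F →ₗ[F] F) (j : ℕ) : ∀ i b, (∀ a' < Fintype.card F * j + i, ∀ b', φ (mo F a' b') = 0) →
    φ (DD F ^ j * mo F i b) = φ (mo F (Fintype.card F * j + i) b) := by
  have hq1 : 1 < Fintype.card F := card_gt
  induction j with
  | zero => intro i b _; simp
  | succ j ih =>
    intro i b h
    have e : DD F ^ (j + 1) * mo F i b = DD F ^ j * mo F (i + Fintype.card F) b -
        DD F ^ j * mo F (i + 1) (b + (Fintype.card F - 1)) := by
      have hD : DD F = xv F ^ Fintype.card F - xv F * yv F ^ (Fintype.card F - 1) := rfl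
      simp only [pow_succ, mo, pow_add, pow_one]
      linear_combination (DD F ^ j * xv F ^ i * yv F ^ b) * hD
    have e1 : Fintype.card F * (j + 1) + i = Fintype.card F * j + (i + Fintype.card F) := by ring
    rw [e1] at h ⊢
    clear e1
    rw [e, map_sub, ih _ _ h, ih _ _ (fun a' ha' => h a' (by omega)), h (Fintype.card F * j + (i + 1)) (by omega) _, sub_zero]

lemma KG_inj {k : ℕ} (hk0 : 0 < k) (hk : Fintype.card F - 1 ∣ k) {φ : SS F →ₗ[F] F}
    (hφ : φ ∈ KInv (⊤ : Subgroup (GL (Fin 2) F)) (LL F 1 ^ (Fintype.card F - 1)) k)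
    (hh : 2 * (Fintype.card F - 1) ≤ k → φ (mo F (Fintype.card F - 1) (k - (Fintype.card F - 1))) = 0) : φ = 0 := by
  have hq1 : 1 < Fintype.card F := card_gt
  have main : ∀ a, a < k → φ (mo F a (k - a)) = 0 := by
    intro a
    induction a using Nat.strong_induction_on with
    | _ a ih =>
    intro hak
    have hlow : ∀ a' < a, ∀ b', φ (mo F a' b') = 0 := by
      intro a' ha' b'
      by_cases hab : a' + b' = k
      · have : b' = k - a' := by omega
        rw [this]; exact ih a' ha' (by omega)
      · exact hφ.1.1 a' b' hab
    by_contra hne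
    have hw := wt_mo hφ.1 le_top hne
    -- k - a is a positive multiple
    have hka : Fintype.card F - 1 ≤ k - a := Nat.le_of_dvd (by omega) hw.2
    have ha : Fintype.card F * (a / Fintype.card F) + a % Fintype.card F = a := Nat.div_add_mod _ _
    have hi : a % Fintype.card F < Fintype.card F := Nat.mod_lt _ (by omega)
    set j := a / Fintype.card F
    set i := a % Fintype.card F
    have hB := stepB φ j i (k - a) (by rw [ha]; exact hlow)
    rw [ha] at hB
    rw [← hB] at hne
    by_cases hi1 : i < Fintype.card F - 1
    · have := stepA hφ.1 le_top j i (k - a - (Fintype.card F - 1 - i)) hi1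
      rw [Nat.add_sub_cancel' (by omega)] at this
      exact hne this
    · have hi2 : i = Fintype.card F - 1 := by omega
      have hwj := (wt_D hφ.1 le_top hne).1
      rw [hi2] at hwj
      have hwj := (Nat.dvd_add_left (dvd_refl _)).1 hwj
      by_cases hj : j = 0
      · have haq : a = Fintype.card F - 1 := by rw [← ha, hj, hi2]; simp
        apply hne
        rw [hB, haq]
        apply hh
        omega
      · have hjq := Nat.le_of_dvd (Nat.pos_of_ne_zero hj) hwj
        apply hne
        have e : DD F ^ j * mo F i (k - a) = LL F 1 ^ (Fintype.card F - 1) *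
            (DD F ^ (j - (Fintype.card F - 1)) * mo F i (k - a - (Fintype.card F - 1))) := by
          conv_lhs => rw [← Nat.add_sub_cancel' hjq, ← Nat.add_sub_cancel' hka]
          rw [LL_DD, mo, mo, mul_pow]
          ring
        rw [e, hφ.2]
  apply dual_ext
  intro a b
  change φ (mo F a b) = 0
  by_cases hab : a + b = k
  · by_cases hb : b = 0
    · subst hb
      have := hφ.1.2 (sw 0) trivial (mo F 0 k)
      change φ (lsub (gm (sw 0)) (mo F 0 k)) = _ at this
      have h0 := main 0 hk0
      rw [Nat.sub_zero] at h0
      rw [h0, mo, map_mul, map_pow, map_pow, lsub_sw_y] at this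
      have hak : a = k := by omega
      subst hak
      simpa [mo] using this
    · have : b = k - a := by omega
      rw [this]; exact main a (by omega)
  · exact hφ.1.1 a b hab

/-- sum over all points -/
noncomputable def phi0 (F : Type) [Field F] [Fintype F] (k : ℕ) : SS F →ₗ[F] F :=
  (∑ v : Fin 2 → F, (MvPolynomial.aeval v : SS F →ₐ[F] F).toLinearMap).comp (MvPolynomial.homogeneousComponent k)

lemma phi0_apply (k : ℕ) (f : SS F) : phi0 F k f = ∑ v : Fin 2 → F, MvPolynomial.aeval v (MvPolynomial.homogeneousComponent k f) := by
  simp [phi0]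

lemma phi0_mem (k : ℕ) : phi0 F k ∈ KInv (⊤ : Subgroup (GL (Fin 2) F)) (LL F 1 ^ (Fintype.card F - 1)) k := by
  have hq1 : 1 < Fintype.card F := card_gt
  refine ⟨⟨?_, ?_⟩, ?_⟩
  · intro a b hab
    rw [phi0_apply, MvPolynomial.homogeneousComponent_of_mem ((MvPolynomial.mem_homogeneousSubmodule _ _).2 (mo_hom a b)),
          if_neg (by omega)]
    simp
  · intro g _ f
    rw [phi0_apply, phi0_apply, lsub_hc]
    have : ∀ v : Fin 2 → F, ∀ P : SS F, MvPolynomial.aeval v (lsub (gm g) P) = MvPolynomial.aeval (gm g *ᵥ v) P := by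
      intro v P
      have : (MvPolynomial.aeval v : SS F →ₐ[F] F).comp (lsub (gm g)) = MvPolynomial.aeval (gm g *ᵥ v) := by
        apply MvPolynomial.algHom_ext
        intro i
        rw [AlgHom.comp_apply, lsub_X]
        rw [MvPolynomial.aeval_X]
        fin_cases i <;> simp [Matrix.mulVec, dotProduct, Fin.sum_univ_two]
      exact DFunLike.congr_fun this P
    simp only [this]
    apply Fintype.sum_bijective (fun v => gm g *ᵥ v)
    · refine ⟨fun v w h => ?_, fun w => ⟨gm g⁻¹ *ᵥ w, ?_⟩⟩
      · have h := congrArg (fun v => gm g⁻¹ *ᵥ v) h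
        simp only [Matrix.mulVec_mulVec, ← gm_mul, inv_mul_cancel] at h
        simpa using h
      · simp only [Matrix.mulVec_mulVec, ← gm_mul, mul_inv_cancel]
        simp
    · intro _; rfl
  · intro f
    rw [phi0_apply]
    have hy := (LL_mem (⊤ : Subgroup (GL (Fin 2) F))).1
    by_cases hlt : k < (Fintype.card F + 1) * (Fintype.card F - 1)
    · rw [hc_mul_lt hy k hlt]; simp
    · have := hc_mul hy (h := f) (k - (Fintype.card F + 1) * (Fintype.card F - 1))
      rw [Nat.sub_add_cancel (by omega)] at this
      rw [this]
      apply Finset.sum_eq_zero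
      intro v _
      have : MvPolynomial.aeval v (LL F 1) = 0 := by
        simp [LL, FiniteField.pow_card]
      rw [map_mul, map_pow, this, zero_pow (by omega), zero_mul]

theorem KInvG (k : ℕ) : Module.finrank F (KInv (⊤ : Subgroup (GL (Fin 2) F)) (LL F 1 ^ (Fintype.card F - 1)) k) =
    if Fintype.card F - 1 ∣ k ∧ (k = 0 ∨ 2 * (Fintype.card F - 1) ≤ k) then 1 else 0 := by
  classical
  have hq1 : 1 < Fintype.card F := card_gt
  split_ifs with hk
  · obtain ⟨hd, hk | hk⟩ := hk
    · subst hk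
      refine finrank_one_of _ (mo F 0 0) ?_ ((ev10 F).toLinearMap.comp (MvPolynomial.homogeneousComponent 0)) ?_ ?_
      · intro φ hφ h0
        apply dual_ext
        intro a b
        by_cases hab : a + b = 0
        · have h1 : a = 0 := by omega
          have h2 : b = 0 := by omega
          subst h1; subst h2; exact h0
        · exact hφ.1.1 a b hab
      · refine ⟨⟨?_, ?_⟩, ?_⟩
        · intro a b hab
          rw [LinearMap.comp_apply, MvPolynomial.homogeneousComponent_of_mem ((MvPolynomial.mem_homogeneousSubmodule _ _).2 (mo_hom a b)),
            if_neg (by omega), map_zero]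
        · intro g _ f
          simp only [LinearMap.comp_apply]
          rw [lsub_hc, MvPolynomial.homogeneousComponent_zero]
          simp
        · intro f
          rw [LinearMap.comp_apply, hc_mul_lt (LL_mem (⊤ : Subgroup (GL (Fin 2) F))).1 0 (Nat.mul_pos (by omega) (by omega)), map_zero]
      · rw [LinearMap.comp_apply, MvPolynomial.homogeneousComponent_of_mem ((MvPolynomial.mem_homogeneousSubmodule _ _).2 (mo_hom 0 0)), if_pos (by omega)]
        simp [ev10_mo]
    · refine finrank_one_of _ (mo F (Fintype.card F - 1) (k - (Fintype.card F - 1))) ?_ (phi0 F k) (phi0_mem k) ?_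
      · intro φ hφ h0
        exact KG_inj (by omega) hd hφ (fun _ => h0)
      · rw [phi0_apply, MvPolynomial.homogeneousComponent_of_mem ((MvPolynomial.mem_homogeneousSubmodule _ _).2 (mo_hom _ _)), if_pos (by omega)]
        obtain ⟨r, hr⟩ : Fintype.card F - 1 ∣ k - (Fintype.card F - 1) := Nat.dvd_sub hd (dvd_refl _)
        have hr0 : r ≠ 0 := by rintro rfl; omega
        have : ∀ t : F, t ^ (k - (Fintype.card F - 1)) = t ^ (Fintype.card F - 1) := by
          intro t
          rw [hr, pow_mul, pow_ind]
          split_ifs <;> simp [hr0]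
        have h2 : ∑ v : Fin 2 → F, MvPolynomial.aeval v (mo F (Fintype.card F - 1) (k - (Fintype.card F - 1))) =
            ∑ z : F × F, z.1 ^ (Fintype.card F - 1) * z.2 ^ (Fintype.card F - 1) := by
          apply Fintype.sum_equiv (finTwoArrowEquiv F)
          intro v
          simp [mo, this]
        rw [h2, Fintype.sum_prod_type]
        simp only [← Finset.mul_sum, sum_pow_top, ← Finset.sum_mul]
        norm_num
  · apply finrank_zero_of
    intro φ hφ
    by_cases hd : Fintype.card F - 1 ∣ k
    · refine KG_inj ?_ hd hφ ?_
      · rcases Nat.eq_zero_or_pos k with h | h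
        · exact absurd ⟨hd, Or.inl h⟩ hk
        · exact h
      · intro h
        exact absurd ⟨hd, Or.inr h⟩ hk
    · exact DInv_zero_of le_top hd hφ.1

end KRanks


section Reduction
variable {F : Type} [Field F]

lemma ex_add (a b c d : ℕ) : ex a b + ex c d = ex (a + c) (b + d) := by
  rw [← ex_eta (ex a b + ex c d)]
  simp only [Finsupp.add_apply, ex_zero, ex_one]

lemma coeff_mul_mo (f : SS F) (a b c d : ℕ) :
    MvPolynomial.coeff (ex (a + c) (b + d)) (f * mo F c d) = MvPolynomial.coeff (ex a b) f := by
  rw [mo_eq, ← ex_add, MvPolynomial.coeff_mul_monomial, mul_one]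

lemma mem_frob {N : ℕ} {f : SS F} :
    f ∈ frobPow F 2 N ↔ ∀ a b, a < N → b < N → MvPolynomial.coeff (ex a b) f = 0 := by
  have h1 : (Set.range fun i : Fin 2 => (MvPolynomial.X i : SS F) ^ N) =
      (fun s => MvPolynomial.monomial s (1 : F)) '' {ex N 0, ex 0 N} := by
    ext z
    simp only [Set.mem_range, Set.mem_image, Set.mem_insert_iff, Set.mem_singleton_iff]
    constructor
    · rintro ⟨i, rfl⟩
      fin_cases i
      · exact ⟨_, Or.inl rfl, by rw [← mo_eq]; simp [mo]⟩
      · exact ⟨_, Or.inr rfl, by rw [← mo_eq]; simp [mo]⟩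
    · rintro ⟨s, rfl | rfl, rfl⟩
      · exact ⟨0, by rw [← mo_eq]; simp [mo]⟩
      · exact ⟨1, by rw [← mo_eq]; simp [mo]⟩
  have hle : ∀ a b c d : ℕ, ex a b ≤ ex c d ↔ a ≤ c ∧ b ≤ d := by
    intro a b c d
    rw [Finsupp.le_def, Fin.forall_fin_two]
    simp only [ex_zero, ex_one]
  rw [frobPow, Submodule.restrictScalars_mem, h1, MvPolynomial.mem_ideal_span_monomial_image]
  constructor
  · intro h a b ha hb
    by_contra hne
    obtain ⟨s, hs, hsle⟩ := h (ex a b) (MvPolynomial.mem_support_iff.2 hne)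
    rcases hs with rfl | rfl
    · have := (hle _ _ _ _).1 hsle; omega
    · have := (hle _ _ _ _).1 hsle; omega
  · intro h s hs
    rw [MvPolynomial.mem_support_iff, ← ex_eta s] at hs
    by_cases h0 : N ≤ s 0
    · refine ⟨ex N 0, Or.inl rfl, ?_⟩
      rw [← ex_eta s, hle]; exact ⟨h0, Nat.zero_le _⟩
    · by_cases h1 : N ≤ s 1
      · refine ⟨ex 0 N, Or.inr rfl, ?_⟩
        rw [← ex_eta s, hle]; exact ⟨Nat.zero_le _, h1⟩
      · exact absurd (h _ _ (not_le.1 h0) (not_le.1 h1)) hs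

lemma frob_mul {N : ℕ} {f : SS F} (hf : f ∈ frobPow F 2 N) (h : SS F) : f * h ∈ frobPow F 2 N :=
  Ideal.mul_mem_right h (Ideal.span (Set.range fun i : Fin 2 => (MvPolynomial.X i : SS F) ^ N)) hf

lemma frob_X {N : ℕ} (i : Fin 2) : (MvPolynomial.X i : SS F) ^ N ∈ frobPow F 2 N :=
  Ideal.subset_span ⟨i, rfl⟩

lemma frob_dvd {N : ℕ} {f h : SS F} (hf : f ∈ frobPow F 2 N) (hd : f ∣ h) : h ∈ frobPow F 2 N := by
  obtain ⟨r, rfl⟩ := hd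
  exact frob_mul hf r

/-- top coefficient -/
noncomputable def tau (F : Type) [Field F] (N : ℕ) : SS F →ₗ[F] F :=
  MvPolynomial.lcoeff F (ex (N - 1) (N - 1))

lemma tau_apply (N : ℕ) (f : SS F) : tau F N f = MvPolynomial.coeff (ex (N - 1) (N - 1)) f := rfl

lemma tau_frob {N : ℕ} (hN : 0 < N) {f : SS F} (hf : f ∈ frobPow F 2 N) : tau F N f = 0 :=
  mem_frob.1 hf _ _ (by omega) (by omega)

lemma mem_frob_iff_tau {N : ℕ} (hN : 0 < N) {f : SS F} :
    f ∈ frobPow F 2 N ↔ ∀ h, tau F N (f * h) = 0 := by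
  constructor
  · intro hf h; exact tau_frob hN (frob_mul hf h)
  · intro h
    rw [mem_frob]
    intro a b ha hb
    have := h (mo F (N - 1 - a) (N - 1 - b))
    rw [tau_apply] at this
    have e1 : N - 1 = a + (N - 1 - a) := by omega
    have e2 : N - 1 = b + (N - 1 - b) := by omega
    rw [← coeff_mul_mo f a b (N - 1 - a) (N - 1 - b), ← e1, ← e2]
    exact this

lemma mem_fixDeg {N d : ℕ} {H : Set (GL (Fin 2) F)} {f : SS F} :
    f ∈ fixDeg F 2 N H d ↔ f.IsHomogeneous d ∧ ∀ g ∈ H, lsub (gm g) f - f ∈ frobPow F 2 N := by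
  simp only [fixDeg, Submodule.mem_inf, Submodule.mem_iInf, Submodule.mem_comap,
    MvPolynomial.mem_homogeneousSubmodule]
  rfl

instance fixDeg_fin (N d : ℕ) (H : Set (GL (Fin 2) F)) : Module.Finite F (fixDeg F 2 N H d) := by
  have := hom_fin (F := F) d
  have h : fixDeg F 2 N H d ≤ MvPolynomial.homogeneousSubmodule (Fin 2) F d := inf_le_left
  exact Module.Finite.of_injective _ (Submodule.inclusion_injective h)

lemma finrank_map_of_ker {V W : Type*} [AddCommGroup V] [Module F V] [AddCommGroup W] [Module F W]
    (M I : Submodule F V) [Module.Finite F M] (T : M →ₗ[F] W) (hT : Function.Surjective T)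
    (hker : ∀ x : M, T x = 0 ↔ (x : V) ∈ I) :
    Module.finrank F (Submodule.map I.mkQ M) = Module.finrank F W := by
  have h1 := LinearMap.finrank_range_add_finrank_ker T
  have h2 := LinearMap.finrank_range_add_finrank_ker (I.mkQ.domRestrict M)
  rw [LinearMap.range_domRestrict] at h2
  have h3 : LinearMap.ker T = LinearMap.ker (I.mkQ.domRestrict M) := by
    ext x
    rw [LinearMap.mem_ker, LinearMap.mem_ker, hker, LinearMap.domRestrict_apply, Submodule.mkQ_apply,
      Submodule.Quotient.mk_eq_zero]
  rw [LinearMap.range_eq_top.2 hT, finrank_top] at h1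
  rw [h3] at h1
  omega

lemma red_top {N d : ℕ} {H : Set (GL (Fin 2) F)} (hd : 2 * N - 2 < d) :
    Module.finrank F (Submodule.map (frobPow F 2 N).mkQ (fixDeg F 2 N H d)) = 0 := by
  have : Submodule.map (frobPow F 2 N).mkQ (fixDeg F 2 N H d) = ⊥ := by
    rw [eq_bot_iff]
    rintro _ ⟨f, hf, rfl⟩
    rw [Submodule.mem_bot, Submodule.mkQ_apply, Submodule.Quotient.mk_eq_zero, mem_frob]
    intro a b ha hb
    exact (mem_fixDeg.1 hf).1.coeff_eq_zero (by rw [ex_degree]; omega)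
  rw [this]; exact finrank_bot F _

lemma frob_low {N d : ℕ} (hd : d < N) {f : SS F} (hf : f.IsHomogeneous d) (hI : f ∈ frobPow F 2 N) : f = 0 := by
  rw [hom_eq_sum hf]
  apply Finset.sum_eq_zero
  intro a ha
  rw [Finset.mem_range] at ha
  rw [mem_frob.1 hI _ _ (by omega) (by omega), zero_smul]

lemma red_low {N d : ℕ} {H : Subgroup (GL (Fin 2) F)} (hd : d < N) :
    Module.finrank F (Submodule.map (frobPow F 2 N).mkQ (fixDeg F 2 N (H : Set (GL (Fin 2) F)) d)) =
      Module.finrank F (PInv H d) := by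
  have e : fixDeg F 2 N (H : Set (GL (Fin 2) F)) d = PInv H d := by
    ext f
    rw [mem_fixDeg, mem_PInv]
    constructor
    · rintro ⟨h1, h2⟩
      refine ⟨h1, fun g hg => sub_eq_zero.1 (frob_low hd ((lsub_hom _ h1).sub h1) (h2 g hg))⟩
    · rintro ⟨h1, h2⟩
      refine ⟨h1, fun g hg => ?_⟩
      have := h2 g hg
      rw [this, sub_self]; exact Submodule.zero_mem _
  rw [e]
  refine finrank_map_of_ker (PInv H d) _ LinearMap.id Function.surjective_id ?_
  rintro ⟨f, hf⟩
  constructor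
  · intro h
    have : f = 0 := congrArg Subtype.val h
    subst this
    exact Submodule.zero_mem _
  · intro h
    exact Subtype.ext (frob_low hd hf.1 h)

end Reduction

section Reduction2
variable {F : Type} [Field F] [Fintype F]

lemma lsub_frob (m : ℕ) (g : Matrix (Fin 2) (Fin 2) F) {f : SS F} (hf : f ∈ frobPow F 2 (Fintype.card F ^ m)) :
    lsub g f ∈ frobPow F 2 (Fintype.card F ^ m) := by
  set I := Ideal.span (Set.range fun i : Fin 2 => (MvPolynomial.X i : SS F) ^ (Fintype.card F ^ m)) with hI
  have : I ≤ Ideal.comap (lsub g) I := by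
    rw [hI, Ideal.span_le]
    rintro _ ⟨i, rfl⟩
    change lsub g _ ∈ I
    rw [map_pow, lsub_X, frob_lin]
    exact I.add_mem (I.mul_mem_left _ (Ideal.subset_span ⟨0, rfl⟩)) (I.mul_mem_left _ (Ideal.subset_span ⟨1, rfl⟩))
  exact this hf

lemma pow_N_sub_one (m : ℕ) {v : F} (hv : v ≠ 0) : v ^ (Fintype.card F ^ m - 1) = 1 := by
  have h := FiniteField.pow_card_pow m v
  have hp : 0 < Fintype.card F ^ m := Nat.pow_pos Fintype.card_pos
  obtain ⟨r, hr⟩ : ∃ r, Fintype.card F ^ m = r + 1 := ⟨Fintype.card F ^ m - 1, by omega⟩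
  rw [hr] at h ⊢
  rw [Nat.add_sub_cancel]
  rw [pow_succ] at h
  exact mul_right_cancel₀ hv (h.trans (one_mul v).symm)

lemma tau_eq_of {N : ℕ} (hN : 0 < N) {f h : SS F} (hf : f - h ∈ frobPow F 2 N) : tau F N f = tau F N h := by
  have := tau_frob hN hf
  rwa [map_sub, sub_eq_zero] at this

/-- Replace the second factor modulo A^N -/
lemma tau_repl {n : ℕ} {A B B' : SS F} (hA : A ^ (n + 1) ∈ frobPow F 2 (n + 1)) (hd : A ∣ B - B') :
    tau F (n + 1) (A ^ n * B ^ n) = tau F (n + 1) (A ^ n * B' ^ n) := by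
  apply tau_eq_of (Nat.succ_pos n)
  rw [← mul_sub]
  apply frob_dvd hA
  rw [pow_succ]
  exact mul_dvd_mul_left _ (hd.trans (sub_dvd_pow_sub_pow _ _ _))

lemma tau_main (m : ℕ) (g : GL (Fin 2) F) :
    tau F (Fintype.card F ^ m) (lsub (gm g) (mo F (Fintype.card F ^ m - 1) (Fintype.card F ^ m - 1))) = 1 := by
  have hp : 0 < Fintype.card F ^ m := Nat.pow_pos Fintype.card_pos
  have hlin : ∀ a b : F, (MvPolynomial.C a * xv F + MvPolynomial.C b * yv F) ^ Fintype.card F ^ m ∈ frobPow F 2 (Fintype.card F ^ m) := by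
    intro a b
    rw [frob_lin, mul_comm (MvPolynomial.C a), mul_comm (MvPolynomial.C b)]
    exact Submodule.add_mem _ (frob_mul (frob_X 0) _) (frob_mul (frob_X 1) _)
  have hy : yv F ^ Fintype.card F ^ m ∈ frobPow F 2 (Fintype.card F ^ m) := frob_X 1
  have hone : ∀ v : F, v ≠ 0 → v ^ (Fintype.card F ^ m - 1) = 1 := fun v hv => pow_N_sub_one m hv
  have hdet := gm_det g
  rw [mo, map_mul, map_pow, map_pow, lsub_X, lsub_X]
  generalize gm g 0 0 = a at *
  generalize gm g 0 1 = b at *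
  generalize gm g 1 0 = c at *
  generalize gm g 1 1 = d at *
  generalize Fintype.card F ^ m = N at *
  obtain ⟨n, rfl⟩ : ∃ n, N = n + 1 := ⟨N - 1, by omega⟩
  rw [Nat.add_sub_cancel] at *
  have hmo : ∀ s : F, s ^ n = 1 → tau F (n + 1) ((MvPolynomial.C s * xv F) ^ n * yv F ^ n) = 1 := by
    intro s hs
    have : (MvPolynomial.C s * xv F) ^ n * yv F ^ n = mo F n n := by
      rw [mul_pow, ← map_pow, hs, map_one, one_mul, mo]
    rw [this, tau_apply, Nat.add_sub_cancel, coeff_mo]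
    simp
  by_cases ha : a = 0
  · subst ha
    have hb : b ≠ 0 := by rintro rfl; simp at hdet
    have hc : c ≠ 0 := by rintro rfl; simp at hdet
    have e : ∀ B : SS F, (MvPolynomial.C 0 * xv F + MvPolynomial.C b * yv F) ^ n * B = yv F ^ n * B := by
      intro B
      rw [map_zero, zero_mul, zero_add, mul_pow, ← map_pow, hone b hb, map_one, one_mul]
    rw [e, tau_repl hy (B' := MvPolynomial.C c * xv F) ⟨MvPolynomial.C d, by ring⟩, mul_comm]
    exact hmo c (hone c hc)
  · have hv : (a * d - b * c) / a ≠ 0 := div_ne_zero hdet ha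
    rw [tau_repl (hlin a b) (B' := MvPolynomial.C ((a * d - b * c) / a) * yv F) ⟨MvPolynomial.C (c / a), ?_⟩]
    · rw [mul_pow (MvPolynomial.C ((a * d - b * c) / a)), ← map_pow, hone _ hv, map_one, one_mul, mul_comm,
        tau_repl hy (B' := MvPolynomial.C a * xv F) ⟨MvPolynomial.C b, by ring⟩, mul_comm]
      exact hmo a (hone a ha)
    · have h1 : c = a * (c / a) := by field_simp
      have h2 : d = (a * d - b * c) / a + b * (c / a) := by field_simp; ring
      generalize (a * d - b * c) / a = v at *
      generalize c / a = u at *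
      subst h1 
      rw [h2]
      simp only [map_add, map_mul]
      ring

lemma tau_inv (m : ℕ) (g : GL (Fin 2) F) (f : SS F) :
    tau F (Fintype.card F ^ m) (lsub (gm g) f) = tau F (Fintype.card F ^ m) f := by
  have hp : 0 < Fintype.card F ^ m := Nat.pow_pos Fintype.card_pos
  have : (tau F (Fintype.card F ^ m)).comp (lsub (gm g)).toLinearMap = tau F (Fintype.card F ^ m) := by
    apply dual_ext
    intro a b
    rw [LinearMap.comp_apply, AlgHom.toLinearMap_apply]
    by_cases hab : a = Fintype.card F ^ m - 1 ∧ b = Fintype.card F ^ m - 1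
    · obtain ⟨rfl, rfl⟩ := hab
      rw [tau_main, tau_apply, coeff_mo]; simp
    · rw [tau_apply _ (mo F a b), coeff_mo, if_neg hab]
      by_cases hI : Fintype.card F ^ m ≤ a ∨ Fintype.card F ^ m ≤ b
      · apply tau_frob hp
        apply lsub_frob
        rw [mem_frob]
        intro a' b' ha' hb'
        rw [coeff_mo, if_neg (by omega)]
      · rw [tau_apply]
        apply (lsub_hom (gm g) (mo_hom a b)).coeff_eq_zero
        rw [ex_degree]; omega
  exact DFunLike.congr_fun this f

/-- pairing -/
noncomputable def prr (F : Type) [Field F] (N : ℕ) : SS F →ₗ[F] SS F →ₗ[F] F :=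
  (LinearMap.mul F (SS F)).compr₂ (tau F N)

lemma prr_apply (N : ℕ) (f h : SS F) : prr F N f h = tau F N (f * h) := rfl

lemma red_mid {m d : ℕ} {H : Subgroup (GL (Fin 2) F)} (hd : Fintype.card F ^ m ≤ d + 1)
    (hd2 : d ≤ 2 * Fintype.card F ^ m - 2) :
    Module.finrank F (Submodule.map (frobPow F 2 (Fintype.card F ^ m)).mkQ
      (fixDeg F 2 (Fintype.card F ^ m) (H : Set (GL (Fin 2) F)) d)) =
      Module.finrank F (DInv H (2 * Fintype.card F ^ m - 2 - d)) := by
  have hp : 0 < Fintype.card F ^ m := Nat.pow_pos Fintype.card_pos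
  have hinv := fun g f => tau_inv (F := F) m g f
  set N := Fintype.card F ^ m with hNdef
  have hmem : ∀ f ∈ fixDeg F 2 N (H : Set (GL (Fin 2) F)) d, prr F N f ∈ DInv H (2 * N - 2 - d) := by
    intro f hf
    obtain ⟨h1, h2⟩ := mem_fixDeg.1 hf
    refine ⟨fun a b hab => ?_, fun g hg h => ?_⟩
    · rw [prr_apply, tau_apply]
      apply (h1.mul (mo_hom a b)).coeff_eq_zero
      rw [ex_degree]; omega
    · rw [prr_apply, prr_apply, ← hinv g (f * h)]
      have e : lsub (gm g) (f * h) = lsub (gm g) f * lsub (gm g) h := map_mul _ _ _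
      rw [e]
      symm
      apply tau_eq_of hp
      rw [← sub_mul]
      exact frob_mul (h2 g hg) _
  let T : fixDeg F 2 N (H : Set (GL (Fin 2) F)) d →ₗ[F] DInv H (2 * N - 2 - d) :=
    LinearMap.codRestrict _ ((prr F N).domRestrict _) (fun f => hmem f.1 f.2)
  refine finrank_map_of_ker (F := F) (V := SS F) (W := DInv H (2 * N - 2 - d)) (fixDeg F 2 N (H : Set (GL (Fin 2) F)) d) (frobPow F 2 N) T ?_ ?_
  · rintro ⟨φ, hφ⟩
    let f : SS F := ∑ z ∈ Finset.range N ×ˢ Finset.range N, φ (mo F z.1 z.2) • mo F (N - 1 - z.1) (N - 1 - z.2)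
    have hf : ∀ h, prr F N f h = φ h := by
      intro h
      have : prr F N f = φ := by
        apply dual_ext
        intro a b
        rw [prr_apply, Finset.sum_mul, map_sum]
        by_cases hab : a < N ∧ b < N
        · rw [Finset.sum_eq_single (a, b)]
          · rw [smul_mul_assoc, mo_mul, map_smul, tau_apply, coeff_mo, if_pos (by dsimp only; omega)]
            simp
          · rintro ⟨a', b'⟩ hz hne
            simp only [Finset.mem_product, Finset.mem_range] at hz
            rw [smul_mul_assoc, mo_mul, map_smul, tau_apply, coeff_mo, if_neg, smul_zero]
            intro hc
            apply hne
            dsimp only at hc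
            ext <;> dsimp only <;> omega
          · intro hc
            simp only [Finset.mem_product, Finset.mem_range] at hc
            exact absurd hab hc
        · rw [hφ.1 a b (by omega)]
          apply Finset.sum_eq_zero
          rintro ⟨a', b'⟩ hz
          simp only [Finset.mem_product, Finset.mem_range] at hz
          rw [smul_mul_assoc, mo_mul, map_smul, tau_apply, coeff_mo, if_neg, smul_zero]
          dsimp only
          omega
      rw [this]
    have hfm : f ∈ fixDeg F 2 N (H : Set (GL (Fin 2) F)) d := by
      rw [mem_fixDeg]
      constructor
      · apply MvPolynomial.IsHomogeneous.sum
        rintro ⟨a, b⟩ hz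
        simp only [Finset.mem_product, Finset.mem_range] at hz
        by_cases hab : a + b = 2 * N - 2 - d
        · exact (MvPolynomial.homogeneousSubmodule (Fin 2) F d).smul_mem _ (mo_hom' (by dsimp only; omega))
        · dsimp only
          rw [hφ.1 a b hab, zero_smul]
          exact MvPolynomial.isHomogeneous_zero _ _ _
      · intro g hg
        rw [mem_frob_iff_tau hp]
        intro h
        have h1 : h = lsub (gm g) (lsub (gm g⁻¹) h) := by
          rw [lsub_gg, inv_mul_cancel, lsub_g1]
        rw [sub_mul, map_sub, sub_eq_zero]
        have h2 : tau F N (lsub (gm g) f * h) = prr F N f (lsub (gm g⁻¹) h) := by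
          rw [prr_apply, ← hinv g (f * _), map_mul (lsub (gm g)), ← h1]
        rw [h2, hf]
        have h3 : tau F N (f * h) = prr F N f h := rfl
        rw [h3, hf]
        exact hφ.2 g⁻¹ (H.inv_mem hg) h
    refine ⟨⟨f, hfm⟩, Subtype.ext ?_⟩
    exact LinearMap.ext hf
  · rintro ⟨f, hf⟩
    rw [mem_frob_iff_tau hp]
    constructor
    · intro h0 h
      have : prr F N f = 0 := congrArg Subtype.val h0
      have := LinearMap.congr_fun this h
      exact this
    · intro h
      apply Subtype.ext
      exact LinearMap.ext h

end Reduction2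

section Parab
variable {F : Type} [Field F]

lemma psum_const (c i : ℕ) : _root_.psum (fun _ => c) i = i * c := by
  simp [_root_.psum]

lemma Pa_two : Pa F 2 1 (fun _ => 2) = ((⊤ : Subgroup (GL (Fin 2) F)) : Set (GL (Fin 2) F)) := by
  ext g
  refine ⟨fun _ => trivial, fun _ => ?_⟩
  intro r s i hi h1 h2
  rw [psum_const] at h1 h2
  have := r.2
  have := s.2
  omega

lemma Pa_oneone : Pa F 2 2 (fun _ => 1) = ((BB F : Subgroup (GL (Fin 2) F)) : Set (GL (Fin 2) F)) := by
  ext g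
  rw [SetLike.mem_coe, mem_BB]
  constructor
  · intro h
    exact h 1 0 1 (by norm_num) (by simp [psum_const]) (by simp [psum_const])
  · intro h r s i hi h1 h2
    rw [psum_const] at h1 h2
    have h3 := r.2
    have h4 := s.2
    have hr : r = 1 := by apply Fin.ext; simp; omega
    have hs : s = 0 := by apply Fin.ext; simp; omega
    rw [hr, hs]; exact h

end Parab


section Arith

/-- geometric sums -/
def GS (q : ℕ) : ℕ → ℕ
  | 0 => 0
  | m + 1 => 1 + q * GS q m

lemma GS_pow (r m : ℕ) : (r + 1) ^ m = r * GS (r + 1) m + 1 := by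
  induction m with
  | zero => simp [GS]
  | succ m ih => rw [pow_succ, ih, GS]; ring

lemma GS_dvd (q m : ℕ) : q + 1 ∣ GS q m ∨ q + 1 ∣ GS q (m + 1) := by
  induction m with
  | zero => left; simp [GS]
  | succ m ih =>
    rcases ih with h | h
    · right
      obtain ⟨c, hc⟩ := h
      exact ⟨1 + q * q * c, by rw [GS, GS, hc]; ring⟩
    · left; exact h

lemma ediv_neg_aux {q : ℤ} (hq : 0 < q) (x : ℤ) : (-x) / q = -((x - 1) / q) - 1 := by
  have h1 := Int.emod_add_mul_ediv (x - 1) q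
  have h2 := Int.emod_nonneg (x - 1) hq.ne'
  have h3 := Int.emod_lt_of_pos (x - 1) hq
  have : -x = (q - 1 - (x - 1) % q) + q * (-((x - 1) / q) - 1) := by linear_combination h1
  rw [this, Int.add_mul_ediv_left _ _ hq.ne', Int.ediv_eq_zero_of_lt (by omega) (by omega)]
  ring

/-- formula for GL_2 -/
def fG (q z : ℤ) : ℤ := z / q + (-z) / (q + 1) + 1
/-- formula for the Borel -/
def fB (q z : ℤ) : ℤ := z / q + 1

/-- cut-off -/
def fe (f : ℤ → ℤ) (z : ℤ) : ℤ := if 0 ≤ z then f z else 0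

lemma dv_ind {q : ℤ} (hq : 0 < q) (z : ℤ) : z / q - (z - 1) / q = if q ∣ z then 1 else 0 := by
  have h1 := Int.emod_add_mul_ediv (z - 1) q
  have h2 := Int.emod_nonneg (z - 1) hq.ne'
  have h3 := Int.emod_lt_of_pos (z - 1) hq
  have e : z = ((z - 1) % q + 1) + q * ((z - 1) / q) := by linear_combination -h1
  have e2 : z / q = ((z - 1) % q + 1) / q + (z - 1) / q := by
    conv_lhs => rw [e]
    rw [Int.add_mul_ediv_left _ _ hq.ne']
  rw [e2]
  by_cases h : (z - 1) % q + 1 = q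
  · rw [h, Int.ediv_self hq.ne', if_pos]
    · ring
    · rw [e, h]; exact Dvd.intro (1 + (z-1)/q) (by ring)
  · rw [Int.ediv_eq_zero_of_lt (by omega) (by omega), if_neg]
    · ring
    · rintro ⟨c, hc⟩
      have : q ∣ (z - 1) % q + 1 := ⟨c - (z - 1) / q, by linear_combination hc - e⟩
      have := Int.le_of_dvd (by omega) this
      omega

lemma fG_neg {q : ℤ} (hq : 2 ≤ q) {z : ℤ} (h1 : -(2 * q) ≤ z) (h2 : z < 0) : fG q z = 0 := by
  unfold fG
  by_cases h : -q ≤ z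
  · have e1 : z / q = -1 := by
      rw [show z = (z + q) + q * (-1) by ring, Int.add_mul_ediv_left _ _ (by omega), Int.ediv_eq_zero_of_lt (by omega) (by omega)]; ring
    rw [e1, Int.ediv_eq_zero_of_lt (by omega) (by omega)]; ring
  · have e1 : z / q = -2 := by
      rw [show z = (z + 2 * q) + q * (-2) by ring, Int.add_mul_ediv_left _ _ (by omega), Int.ediv_eq_zero_of_lt (by omega) (by omega)]; ring
    have e2 : (-z) / (q + 1) = 1 := by
      rw [show -z = (-z - (q + 1)) + (q + 1) * 1 by ring, Int.add_mul_ediv_left _ _ (by omega), Int.ediv_eq_zero_of_lt (by omega) (by omega)]; ring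
    rw [e1, e2]; ring

lemma fG_rec {q : ℤ} (hq : 2 ≤ q) (z : ℤ) : fG q z = (if q ∣ z then 1 else 0) + fG q (z - (q + 1)) := by
  unfold fG
  rw [← dv_ind (by omega : 0 < q)]
  have e1 : (z - (q + 1)) / q = (z - 1) / q - 1 := by
    rw [show z - (q + 1) = (z - 1) + q * (-1) by ring, Int.add_mul_ediv_left _ _ (by omega)]; ring
  have e2 : (-(z - (q + 1))) / (q + 1) = (-z) / (q + 1) + 1 := by
    rw [show -(z - (q + 1)) = (-z) + (q + 1) * 1 by ring, Int.add_mul_ediv_left _ _ (by omega)]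
  rw [e1, e2]; ring

lemma fG_recip {q : ℤ} (hq : 2 ≤ q) (z : ℤ) : fG q (1 - z) = - fG q (z - 2 * (q + 1)) := by
  unfold fG
  have e1 : (1 - z) / q = -((z - 2) / q) - 1 := by
    have := ediv_neg_aux (by omega : 0 < q) (z - 1)
    rw [show -(z - 1) = 1 - z by ring, show z - 1 - 1 = z - 2 by ring] at this
    exact this
  have e2 : (z - 2 * (q + 1)) / q = (z - 2) / q - 2 := by
    rw [show z - 2 * (q + 1) = (z - 2) + q * (-2) by ring, Int.add_mul_ediv_left _ _ (by omega)]; ring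
  have e3 : (-(z - 2 * (q + 1))) / (q + 1) = (-z) / (q + 1) + 2 := by
    rw [show -(z - 2 * (q + 1)) = (-z) + (q + 1) * 2 by ring, Int.add_mul_ediv_left _ _ (by omega)]
  have e4 := ediv_neg_aux (by omega : 0 < q + 1) z
  rw [show -(1 - z) = z - 1 by ring, e1, e2, e3, e4]; ring

lemma fG_add {q : ℤ} (hq : 2 ≤ q) {a b : ℤ} (hd : q + 1 ∣ a ∨ q + 1 ∣ b) (z : ℤ) :
    fG q z - fG q (z - a) - fG q (z - q * b) + fG q (z - a - q * b) = 0 := by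
  unfold fG
  have e1 : ∀ y, (y - q * b) / q = y / q - b := by
    intro y
    rw [show y - q * b = y + q * (-b) by ring, Int.add_mul_ediv_left _ _ (by omega)]; ring
  rw [e1, e1]
  rcases hd with ⟨c, hc⟩ | ⟨c, hc⟩
  · have e2 : ∀ y, (-(z - a - y)) / (q + 1) = (-(z - y)) / (q + 1) + c := by
      intro y
      rw [show -(z - a - y) = -(z - y) + (q + 1) * c by rw [hc]; ring, Int.add_mul_ediv_left _ _ (by omega)]
    have e3 := e2 0
    rw [sub_zero, sub_zero] at e3
    rw [e2, e3]; ring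
  · have e2 : ∀ y, (-(y - q * b)) / (q + 1) = (-y) / (q + 1) + q * c := by
      intro y
      rw [show -(y - q * b) = -y + (q + 1) * (q * c) by rw [hc]; ring, Int.add_mul_ediv_left _ _ (by omega)]
    rw [e2, e2]; ring

lemma fG_zero {q : ℤ} (hq : 2 ≤ q) : fG q 0 = 1 := by simp [fG]
lemma fG_one {q : ℤ} (hq : 2 ≤ q) : fG q 1 = 0 := by
  have := fG_recip hq 0
  rw [sub_zero] at this
  rw [this, fG]
  have e1 : (0 - 2 * (q + 1)) / q + 2 = (-2) / q := by
    rw [show 0 - 2 * (q + 1) = -2 + q * (-2) by ring, Int.add_mul_ediv_left _ _ (by omega)]; ring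
  have e2 : (-2) / q = -1 := by
    rw [show (-2) = (q - 2) + q * (-1) by ring, Int.add_mul_ediv_left _ _ (by omega), Int.ediv_eq_zero_of_lt (by omega) (by omega)]; ring
  have e3 : (-(0 - 2 * (q + 1))) / (q + 1) = 2 := by
    rw [show -(0 - 2 * (q + 1)) = (q + 1) * 2 by ring, Int.mul_ediv_cancel_left _ (by omega)]
  rw [e3]; omega

lemma coreG {q a b : ℤ} (hq : 2 ≤ q) (hb : 0 ≤ b) (ha : a = 1 + q * b) (hd : q + 1 ∣ a ∨ q + 1 ∣ b) (z : ℤ) (hz : 0 ≤ z) :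
    (if z ≤ a then fe (fG q) z else if z ≤ 2 * a then
      (if 2 * a - z = 0 ∨ 2 ≤ 2 * a - z then 1 else 0) + fe (fG q) (2 * a - z - 2 * (q + 1)) else 0) =
    (if z = 2 * a then 1 else 0) + ((if q * b ≤ z then 1 else 0) - (if q * b + a ≤ z then 1 else 0)) +
      (fe (fG q) z - fe (fG q) (z - a) - fe (fG q) (z - q * b) + fe (fG q) (z - a - q * b)) := by
  have h0 := fG_zero hq
  have h1 := fG_one hq
  have hadd := fG_add hq hd z
  have hrec := fG_recip hq (2 * a - z)
  have hneg := @fG_neg q hq (1 - (2 * a - z))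
  have hqb : q * b = a - 1 := by omega
  have hqb0 : 0 ≤ a - 1 := by rw [← hqb]; positivity
  rw [hqb] at hadd ⊢
  rw [show 1 - (2 * a - z) = z - a - (a - 1) by ring] at hrec hneg
  have hz0 : z - a - (a - 1) = 0 → fG q (z - a - (a - 1)) = 1 := fun h => by rw [h]; exact h0
  unfold fe
  by_cases c1 : z ≤ a
  · rw [if_pos c1]
    by_cases c2 : z = a
    · subst c2
      rw [sub_self] at hz0 ⊢
      rw [show z - (z - 1) = 1 by ring]
      simp only [h0, h1]
      split_ifs <;> omega
    · by_cases c3 : z = a - 1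
      · subst c3
        rw [sub_self]
        simp only [h0]
        split_ifs <;> omega
      · split_ifs <;> omega
  · rw [if_neg c1]
    split_ifs <;> omega

lemma fB_add {q : ℤ} (hq : 2 ≤ q) (a b z : ℤ) :
    fB q z - fB q (z - a) - fB q (z - q * b) + fB q (z - a - q * b) = 0 := by
  unfold fB
  have e1 : ∀ y, (y - q * b) / q = y / q - b := by
    intro y
    rw [show y - q * b = y + q * (-b) by ring, Int.add_mul_ediv_left _ _ (by omega)]; ring
  rw [e1, e1]; ring

lemma fB_recip {q : ℤ} (hq : 2 ≤ q) (z : ℤ) : fB q (1 - z) = 1 - fB q (z - 2) := by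
  unfold fB
  have := ediv_neg_aux (by omega : 0 < q) (z - 1)
  rw [show -(z - 1) = 1 - z by ring, show z - 1 - 1 = z - 2 by ring] at this
  rw [this]; ring

lemma coreB {q a b : ℤ} (hq : 2 ≤ q) (hb : 0 ≤ b) (ha : a = 1 + q * b) (z : ℤ) (hz : 0 ≤ z) :
    (if z ≤ a then fe (fB q) z else if z ≤ 2 * a then 1 + fe (fB q) (2 * a - z - 2) else 0) =
    (if z = 2 * a then 1 else 0) + ((if q * b ≤ z then 1 else 0) - (if q * b + a ≤ z then 1 else 0)) +
      ((if a ≤ z then 1 else 0) - (if a + a ≤ z then 1 else 0)) +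
      (fe (fB q) z - fe (fB q) (z - a) - fe (fB q) (z - q * b) + fe (fB q) (z - a - q * b)) := by
  have h0 : fB q 0 = 1 := by simp [fB]
  have h1 : fB q 1 = 1 := by simp [fB, Int.ediv_eq_zero_of_lt (by norm_num : (0:ℤ) ≤ 1) (by omega : 1 < q)]
  have hadd := fB_add hq a b z
  have hrec := fB_recip hq (2 * a - z)
  have hqb : q * b = a - 1 := by omega
  have hqb0 : 0 ≤ a - 1 := by rw [← hqb]; positivity
  rw [hqb] at hadd ⊢
  rw [show 1 - (2 * a - z) = z - a - (a - 1) by ring] at hrec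
  have hz0 : z - a - (a - 1) = 0 → fB q (z - a - (a - 1)) = 1 := fun h => by rw [h]; exact h0
  unfold fe
  by_cases c1 : z ≤ a
  · rw [if_pos c1]
    by_cases c2 : z = a
    · subst c2
      rw [sub_self] at hz0 ⊢
      rw [show z - (z - 1) = 1 by ring]
      simp only [h0, h1]
      split_ifs <;> omega
    · by_cases c3 : z = a - 1
      · subst c3
        rw [sub_self]
        simp only [h0]
        split_ifs <;> omega
      · split_ifs <;> omega
  · rw [if_neg c1, if_pos (by omega : a - 1 ≤ z), if_pos (by omega : a ≤ z), if_pos hz,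
      if_pos (by omega : 0 ≤ z - a), if_pos (by omega : 0 ≤ z - (a - 1))]
    split_ifs <;> omega

end Arith


section Series

lemma seq_zero {r q s : ℕ} (hs : 0 < s) (hr : 0 < r) {p : ℕ → ℕ}
    (hp : ∀ n, p n = (if q * r ∣ n then 1 else 0) + if s * r ≤ n then p (n - s * r) else 0) :
    ∀ n, ¬ r ∣ n → p n = 0 := by
  intro n
  induction n using Nat.strong_induction_on with
  | _ n ih =>
  intro hn
  have hsr : 0 < s * r := Nat.mul_pos hs hr
  rw [hp, if_neg (fun h => hn ((Dvd.intro_left q rfl).trans h)), zero_add]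
  split_ifs with h
  · apply ih _ (by omega)
    intro hd
    apply hn
    have := Nat.dvd_add hd (Dvd.intro_left s rfl : r ∣ s * r)
    rwa [Nat.sub_add_cancel h] at this
  · rfl

lemma seq_val {r q s : ℕ} (hs : 0 < s) (hr : 0 < r) {p : ℕ → ℕ}
    (hp : ∀ n, p n = (if q * r ∣ n then 1 else 0) + if s * r ≤ n then p (n - s * r) else 0)
    {f : ℤ → ℤ} (hf : ∀ z, 0 ≤ z → f z = (if (q : ℤ) ∣ z then 1 else 0) + fe f (z - s)) :
    ∀ z : ℕ, (p (r * z) : ℤ) = f z := by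
  intro z
  induction z using Nat.strong_induction_on with
  | _ z ih =>
  rw [hp, hf _ (Int.natCast_nonneg z), Nat.cast_add]
  congr 1
  · have : q * r ∣ r * z ↔ (q : ℤ) ∣ (z : ℤ) := by
      rw [mul_comm q r, Nat.mul_dvd_mul_iff_left hr, Int.natCast_dvd_natCast]
    simp only [this]
    split_ifs <;> rfl
  · have h1 : s * r ≤ r * z ↔ s ≤ z := by
      rw [mul_comm s r]; exact Nat.mul_le_mul_left_iff hr
    simp only [h1]
    unfold fe
    split_ifs with h2 h3 h3
    · rw [mul_comm s r, ← Nat.mul_sub, ih (z - s) (by omega), Nat.cast_sub h2]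
    · omega
    · omega
    · rfl

/-- divisibility series -/
noncomputable def US (e : ℕ) : PowerSeries ℚ := PowerSeries.mk fun n => if e ∣ n then 1 else 0

lemma mul_of_rec (e : ℕ) (a b : ℕ → ℚ) (h : ∀ n, a n = b n + if e ≤ n then a (n - e) else 0) :
    PowerSeries.mk a * (1 - (PowerSeries.X : PowerSeries ℚ) ^ e) = PowerSeries.mk b := by
  ext n
  rw [mul_sub, mul_one, mul_comm (PowerSeries.mk a), map_sub, PowerSeries.coeff_X_pow_mul', PowerSeries.coeff_mk, PowerSeries.coeff_mk, h n]
  split_ifs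
  · simp only [PowerSeries.coeff_mk]; ring
  · simp only [PowerSeries.coeff_mk]; ring

lemma US_mul {e : ℕ} (he : 0 < e) : US e * (1 - (PowerSeries.X : PowerSeries ℚ) ^ e) = 1 := by
  rw [US, mul_of_rec e _ (fun n => if n = 0 then 1 else 0)]
  · ext n; rw [PowerSeries.coeff_mk, PowerSeries.coeff_one]
  · intro n
    by_cases h : e ≤ n
    · have : e ∣ n - e ↔ e ∣ n := by
        constructor
        · intro hd
          have := Nat.dvd_add hd (dvd_refl e)
          rwa [Nat.sub_add_cancel h] at this
        · intro hd; exact Nat.dvd_sub hd (dvd_refl e)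
      rw [if_pos h, if_neg (by omega : ¬ n = 0)]
      simp only [this, zero_add]
    · rw [if_neg h, add_zero]
      by_cases hn : n = 0
      · subst hn; simp
      · rw [if_neg hn, if_neg]
        intro hd
        have := Nat.le_of_dvd (by omega) hd
        omega

lemma cc_ne {e : ℕ} (he : 0 < e) : PowerSeries.constantCoeff (1 - (PowerSeries.X : PowerSeries ℚ) ^ e) ≠ 0 := by
  simp [he.ne']

lemma US_inv {e : ℕ} (he : 0 < e) : (1 - (PowerSeries.X : PowerSeries ℚ) ^ e)⁻¹ = US e := by
  symm
  rw [PowerSeries.eq_inv_iff_mul_eq_one (cc_ne he)]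
  exact US_mul he

lemma seq_series {r q s : ℕ} (hs : 0 < s) (hr : 0 < r) (hq : 0 < q) {p : ℕ → ℕ}
    (hp : ∀ n, p n = (if q * r ∣ n then 1 else 0) + if s * r ≤ n then p (n - s * r) else 0) :
    (1 - (PowerSeries.X : PowerSeries ℚ) ^ (s * r))⁻¹ * (1 - (PowerSeries.X : PowerSeries ℚ) ^ (q * r))⁻¹ =
      PowerSeries.mk fun n => (p n : ℚ) := by
  rw [US_inv (Nat.mul_pos hq hr), mul_comm]
  symm
  rw [PowerSeries.eq_mul_inv_iff_mul_eq (cc_ne (Nat.mul_pos hs hr)), US]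
  apply mul_of_rec
  intro n
  rw [hp n]
  push_cast
  rfl

lemma cz {r : ℕ} {c : ℕ → ℚ} (hc : ∀ n, ¬ r ∣ n → c n = 0) (e d : ℕ) (hd : ¬ r ∣ d) :
    PowerSeries.coeff d ((PowerSeries.X : PowerSeries ℚ) ^ (r * e) * PowerSeries.mk c) = 0 := by
  rw [PowerSeries.coeff_X_pow_mul']
  split_ifs with h
  · rw [PowerSeries.coeff_mk]
    apply hc
    intro h2
    apply hd
    have := Nat.dvd_add h2 (Dvd.intro e rfl : r ∣ r * e)
    rwa [Nat.sub_add_cancel h] at this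
  · rfl

lemma cP {r : ℕ} (hr : 0 < r) {p : ℕ → ℕ} {f : ℤ → ℤ} (hf : ∀ z : ℕ, (p (r * z) : ℤ) = f z) (e z : ℕ) :
    PowerSeries.coeff (r * z) ((PowerSeries.X : PowerSeries ℚ) ^ (r * e) * PowerSeries.mk fun n => (p n : ℚ)) =
      ((fe f ((z : ℤ) - e) : ℤ) : ℚ) := by
  rw [PowerSeries.coeff_X_pow_mul']
  have h1 : r * e ≤ r * z ↔ e ≤ z := Nat.mul_le_mul_left_iff hr
  simp only [h1]
  unfold fe
  split_ifs with h2 h3 h3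
  · rw [PowerSeries.coeff_mk, ← Nat.mul_sub, ← Nat.cast_sub h2, ← hf]; simp
  · omega
  · omega
  · simp

lemma cU {r : ℕ} (hr : 0 < r) (e z : ℕ) :
    PowerSeries.coeff (r * z) ((PowerSeries.X : PowerSeries ℚ) ^ (r * e) * US r) =
      (((if (e : ℤ) ≤ z then 1 else 0 : ℤ)) : ℚ) := by
  rw [PowerSeries.coeff_X_pow_mul']
  have h1 : r * e ≤ r * z ↔ (e : ℤ) ≤ z := by rw [Nat.mul_le_mul_left_iff hr]; omega
  simp only [h1]
  split_ifs with h2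
  · rw [US, PowerSeries.coeff_mk, ← Nat.mul_sub]; simp
  · simp

lemma cX {r : ℕ} (hr : 0 < r) (e z : ℕ) :
    PowerSeries.coeff (r * z) ((PowerSeries.X : PowerSeries ℚ) ^ (r * e)) =
      (((if (z : ℤ) = e then 1 else 0 : ℤ)) : ℚ) := by
  rw [PowerSeries.coeff_X_pow]
  have h1 : r * z = r * e ↔ (z : ℤ) = e := by rw [Nat.mul_right_inj hr.ne']; omega
  simp only [h1]
  split_ifs <;> simp

lemma recG {q : ℕ} (hq : 2 ≤ q) (z : ℤ) (hz : 0 ≤ z) :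
    fG q z = (if (q : ℤ) ∣ z then 1 else 0) + fe (fG q) (z - ((q + 1 : ℕ) : ℤ)) := by
  have hq' : (2 : ℤ) ≤ q := by omega
  rw [fG_rec hq']
  push_cast
  congr 1
  unfold fe
  split_ifs with h
  · rfl
  · exact fG_neg hq' (by omega) (by omega)

lemma recB {q : ℕ} (hq : 2 ≤ q) (z : ℤ) (hz : 0 ≤ z) :
    fB q z = (if (q : ℤ) ∣ z then 1 else 0) + fe (fB q) (z - ((1 : ℕ) : ℤ)) := by
  have hq' : (2 : ℤ) ≤ q := by omega
  rw [← dv_ind (by omega : (0 : ℤ) < q)]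
  unfold fe fB
  split_ifs with h
  · push_cast; ring
  · have : z = 0 := by omega
    subst this
    have : (0 - 1 : ℤ) / (q : ℤ) = -1 := by
      rw [show (0 - 1 : ℤ) = ((q : ℤ) - 1) + q * (-1) by ring, Int.add_mul_ediv_left _ _ (by omega), Int.ediv_eq_zero_of_lt (by omega) (by omega)]; ring
    rw [this]; simp

lemma serG {r a b : ℕ} (hr : 0 < r) (ha : a = 1 + (r + 1) * b) (hd : r + 1 + 1 ∣ a ∨ r + 1 + 1 ∣ b)
    {p : ℕ → ℕ}
    (hp : ∀ n, p n = (if (r + 1) * r ∣ n then 1 else 0) + if (r + 1 + 1) * r ≤ n then p (n - (r + 1 + 1) * r) else 0) :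
    (PowerSeries.mk fun d => ((if d ≤ r * a then p d else if d ≤ r * (2 * a) then
      (if r ∣ r * (2 * a) - d ∧ (r * (2 * a) - d = 0 ∨ 2 * r ≤ r * (2 * a) - d) then 1 else 0) +
      (if 2 * ((r + 1 + 1) * r) ≤ r * (2 * a) - d then p (r * (2 * a) - d - 2 * ((r + 1 + 1) * r)) else 0) else 0 : ℕ) : ℚ)) =
    (PowerSeries.X : PowerSeries ℚ) ^ (r * (2 * a)) +
      PowerSeries.X ^ (r * ((r + 1) * b)) * ((1 - PowerSeries.X ^ (r * a)) * (1 - PowerSeries.X ^ r)⁻¹) +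
      (1 - PowerSeries.X ^ (r * a)) * (1 - PowerSeries.X ^ (r * ((r + 1) * b))) *
        ((1 - PowerSeries.X ^ ((r + 1 + 1) * r))⁻¹ * (1 - PowerSeries.X ^ ((r + 1) * r))⁻¹) := by
  have h0 := seq_zero (by omega) hr hp
  have hv := seq_val (by omega) hr hp (recG (q := r + 1) (by omega))
  rw [seq_series (by omega) hr (by omega) hp, US_inv hr]
  have e : (PowerSeries.X : PowerSeries ℚ) ^ (r * (2 * a)) +
      PowerSeries.X ^ (r * ((r + 1) * b)) * ((1 - PowerSeries.X ^ (r * a)) * US r) +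
      (1 - PowerSeries.X ^ (r * a)) * (1 - PowerSeries.X ^ (r * ((r + 1) * b))) * (PowerSeries.mk fun n => (p n : ℚ)) =
      PowerSeries.X ^ (r * (2 * a)) +
      (PowerSeries.X ^ (r * ((r + 1) * b)) * US r - PowerSeries.X ^ (r * ((r + 1) * b + a)) * US r) +
      (PowerSeries.X ^ (r * 0) * (PowerSeries.mk fun n => (p n : ℚ)) - PowerSeries.X ^ (r * a) * (PowerSeries.mk fun n => (p n : ℚ)) -
        PowerSeries.X ^ (r * ((r + 1) * b)) * (PowerSeries.mk fun n => (p n : ℚ)) +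
        PowerSeries.X ^ (r * (a + (r + 1) * b)) * (PowerSeries.mk fun n => (p n : ℚ))) := by
    simp only [Nat.mul_add r, pow_add, mul_zero, pow_zero]; ring
  rw [e]
  clear e
  ext d
  rw [PowerSeries.coeff_mk]
  simp only [map_add, map_sub]
  by_cases hrd : r ∣ d
  · obtain ⟨z, rfl⟩ := hrd
    simp only [cP hr hv, cU hr, cX hr]
    have core := coreG (q := (r + 1 : ℕ)) (a := a) (b := b) (by omega) (by omega) (by rw [ha]; push_cast; ring)
      (by
        have := hd
        rw [← Int.natCast_dvd_natCast, ← Int.natCast_dvd_natCast] at this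
        exact_mod_cast this) z (by omega)
    have lhs : ((if r * z ≤ r * a then p (r * z) else if r * z ≤ r * (2 * a) then
      (if r ∣ r * (2 * a) - r * z ∧ (r * (2 * a) - r * z = 0 ∨ 2 * r ≤ r * (2 * a) - r * z) then 1 else 0) +
      (if 2 * ((r + 1 + 1) * r) ≤ r * (2 * a) - r * z then p (r * (2 * a) - r * z - 2 * ((r + 1 + 1) * r)) else 0) else 0 : ℕ) : ℤ) =
      (if (z : ℤ) ≤ a then fe (fG (r + 1 : ℕ)) z else if (z : ℤ) ≤ 2 * a then
      (if (2 : ℤ) * a - z = 0 ∨ 2 ≤ (2 : ℤ) * a - z then 1 else 0) + fe (fG (r + 1 : ℕ)) (2 * a - z - 2 * ((r + 1 : ℕ) + 1)) else 0) := by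
      have i1 : r * z ≤ r * a ↔ (z : ℤ) ≤ a := by rw [Nat.mul_le_mul_left_iff hr]; omega
      have i2 : r * z ≤ r * (2 * a) ↔ (z : ℤ) ≤ 2 * a := by rw [Nat.mul_le_mul_left_iff hr]; omega
      simp only [i1, i2]
      by_cases c1 : (z : ℤ) ≤ a
      · rw [if_pos c1, if_pos c1, hv, fe, if_pos (by omega)]
      · rw [if_neg c1, if_neg c1]
        by_cases c2 : (z : ℤ) ≤ 2 * a
        · rw [if_pos c2, if_pos c2, ← Nat.mul_sub]
          have i3 : r * (2 * a - z) = 0 ↔ (2 : ℤ) * a - z = 0 := by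
            rw [Nat.mul_eq_zero]; omega
          have i4 : 2 * r ≤ r * (2 * a - z) ↔ 2 ≤ (2 : ℤ) * a - z := by
            rw [mul_comm 2 r, Nat.mul_le_mul_left_iff hr]; omega
          have i5 : 2 * ((r + 1 + 1) * r) = r * (2 * (r + 1 + 1)) := by ring
          rw [i5, ← Nat.mul_sub]
          simp only [i3, i4, Nat.mul_le_mul_left_iff hr, dvd_mul_right, true_and]
          rw [Nat.cast_add]
          congr 1
          · split_ifs <;> rfl
          · unfold fe
            split_ifs with c3 c4 c4
            · rw [hv]
              congr 1
              omega
            · omega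
            · omega
            · rfl
        · rw [if_neg c2, if_neg c2]; rfl
    rw [← lhs] at core
    rw [show ((((z : ℕ) : ℤ) - ((0 : ℕ) : ℤ))) = (z : ℤ) by simp]
    have core' := congrArg (fun x : ℤ => (x : ℚ)) core
    simp only [Int.cast_natCast] at core'
    rw [core']
    push_cast
    simp only [sub_sub]
  · have hra : ¬ r ∣ r * (2 * a) - d ∨ r * (2 * a) ≤ d := by
      by_cases h : r * (2 * a) ≤ d
      · exact Or.inr h
      · left
        intro h2
        apply hrd
        exact (Nat.dvd_sub_iff_right (by omega) (Dvd.intro _ rfl)).1 h2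
    have hU : ∀ e, PowerSeries.coeff d ((PowerSeries.X : PowerSeries ℚ) ^ (r * e) * US r) = 0 := fun e =>
      cz (fun n hn => by simp [hn]) e d hrd
    have hP : ∀ e, PowerSeries.coeff d ((PowerSeries.X : PowerSeries ℚ) ^ (r * e) * PowerSeries.mk fun n => (p n : ℚ)) = 0 := fun e =>
      cz (fun n hn => by simp [h0 n hn]) e d hrd
    have hX : PowerSeries.coeff d ((PowerSeries.X : PowerSeries ℚ) ^ (r * (2 * a))) = 0 := by
      rw [PowerSeries.coeff_X_pow, if_neg (by rintro rfl; exact hrd (Dvd.intro _ rfl))]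
    simp only [hU, hP, hX]
    have : (if d ≤ r * a then p d else if d ≤ r * (2 * a) then
      (if r ∣ r * (2 * a) - d ∧ (r * (2 * a) - d = 0 ∨ 2 * r ≤ r * (2 * a) - d) then 1 else 0) +
      (if 2 * ((r + 1 + 1) * r) ≤ r * (2 * a) - d then p (r * (2 * a) - d - 2 * ((r + 1 + 1) * r)) else 0) else 0 : ℕ) = 0 := by
      split_ifs with c1 c2 c3 c4 c4
      · exact h0 d hrd
      · rcases hra with h | h
        · exact absurd c3.1 h
        · have : d = r * (2 * a) := by omega
          exact absurd (this ▸ Dvd.intro _ rfl) hrd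
      · rcases hra with h | h
        · exact absurd c3.1 h
        · have : d = r * (2 * a) := by omega
          exact absurd (this ▸ Dvd.intro _ rfl) hrd
      · rw [zero_add]
        apply h0
        intro h2
        have h3 := Nat.dvd_add h2 (Dvd.intro_left (2 * (r + 1 + 1)) (by ring) : r ∣ 2 * ((r + 1 + 1) * r))
        rw [Nat.sub_add_cancel c4] at h3
        rcases hra with h | h
        · exact h h3
        · have : d = r * (2 * a) := by omega
          exact absurd (this ▸ Dvd.intro _ rfl) hrd
      · rfl
      · rfl
    rw [this]; simp

lemma serB {r a b : ℕ} (hr : 0 < r) (ha : a = 1 + (r + 1) * b)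
    {p : ℕ → ℕ}
    (hp : ∀ n, p n = (if (r + 1) * r ∣ n then 1 else 0) + if 1 * r ≤ n then p (n - 1 * r) else 0) :
    (PowerSeries.mk fun d => ((if d ≤ r * a then p d else if d ≤ r * (2 * a) then
      (if r ∣ r * (2 * a) - d then 1 else 0) +
      (if 2 * r ≤ r * (2 * a) - d then p (r * (2 * a) - d - 2 * r) else 0) else 0 : ℕ) : ℚ)) =
    (PowerSeries.X : PowerSeries ℚ) ^ (r * (2 * a)) +
      PowerSeries.X ^ (r * ((r + 1) * b)) * ((1 - PowerSeries.X ^ (r * a)) * (1 - PowerSeries.X ^ r)⁻¹) +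
      PowerSeries.X ^ (r * a) * ((1 - PowerSeries.X ^ (r * a)) * (1 - PowerSeries.X ^ r)⁻¹) +
      (1 - PowerSeries.X ^ (r * a)) * (1 - PowerSeries.X ^ (r * ((r + 1) * b))) *
        ((1 - PowerSeries.X ^ (1 * r))⁻¹ * (1 - PowerSeries.X ^ ((r + 1) * r))⁻¹) := by
  have h0 := seq_zero (by omega) hr hp
  have hv := seq_val (by omega) hr hp (recB (q := r + 1) (by omega))
  rw [seq_series (by omega) hr (by omega) hp, US_inv hr]
  have e : (PowerSeries.X : PowerSeries ℚ) ^ (r * (2 * a)) +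
      PowerSeries.X ^ (r * ((r + 1) * b)) * ((1 - PowerSeries.X ^ (r * a)) * US r) +
      PowerSeries.X ^ (r * a) * ((1 - PowerSeries.X ^ (r * a)) * US r) +
      (1 - PowerSeries.X ^ (r * a)) * (1 - PowerSeries.X ^ (r * ((r + 1) * b))) * (PowerSeries.mk fun n => (p n : ℚ)) =
      PowerSeries.X ^ (r * (2 * a)) +
      (PowerSeries.X ^ (r * ((r + 1) * b)) * US r - PowerSeries.X ^ (r * ((r + 1) * b + a)) * US r) +
      (PowerSeries.X ^ (r * a) * US r - PowerSeries.X ^ (r * (a + a)) * US r) +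
      (PowerSeries.X ^ (r * 0) * (PowerSeries.mk fun n => (p n : ℚ)) - PowerSeries.X ^ (r * a) * (PowerSeries.mk fun n => (p n : ℚ)) -
        PowerSeries.X ^ (r * ((r + 1) * b)) * (PowerSeries.mk fun n => (p n : ℚ)) +
        PowerSeries.X ^ (r * (a + (r + 1) * b)) * (PowerSeries.mk fun n => (p n : ℚ))) := by
    simp only [Nat.mul_add r, pow_add, mul_zero, pow_zero]; ring
  rw [e]
  clear e
  ext d
  rw [PowerSeries.coeff_mk]
  simp only [map_add, map_sub]
  by_cases hrd : r ∣ d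
  · obtain ⟨z, rfl⟩ := hrd
    simp only [cP hr hv, cU hr, cX hr]
    have core := coreB (q := (r + 1 : ℕ)) (a := a) (b := b) (by omega) (by omega) (by rw [ha]; push_cast; ring) z (by omega)
    have lhs : ((if r * z ≤ r * a then p (r * z) else if r * z ≤ r * (2 * a) then
      (if r ∣ r * (2 * a) - r * z then 1 else 0) +
      (if 2 * r ≤ r * (2 * a) - r * z then p (r * (2 * a) - r * z - 2 * r) else 0) else 0 : ℕ) : ℤ) =
      (if (z : ℤ) ≤ a then fe (fB (r + 1 : ℕ)) z else if (z : ℤ) ≤ 2 * a then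
      1 + fe (fB (r + 1 : ℕ)) (2 * a - z - 2) else 0) := by
      have i1 : r * z ≤ r * a ↔ (z : ℤ) ≤ a := by rw [Nat.mul_le_mul_left_iff hr]; omega
      have i2 : r * z ≤ r * (2 * a) ↔ (z : ℤ) ≤ 2 * a := by rw [Nat.mul_le_mul_left_iff hr]; omega
      simp only [i1, i2]
      by_cases c1 : (z : ℤ) ≤ a
      · rw [if_pos c1, if_pos c1, hv, fe, if_pos (by omega)]
      · rw [if_neg c1, if_neg c1]
        by_cases c2 : (z : ℤ) ≤ 2 * a
        · rw [if_pos c2, if_pos c2, ← Nat.mul_sub]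
          have i5 : 2 * r = r * 2 := by ring
          rw [i5, ← Nat.mul_sub]
          simp only [Nat.mul_le_mul_left_iff hr, dvd_mul_right, if_true]
          rw [Nat.cast_add]
          congr 1
          unfold fe
          split_ifs with c3 c4 c4
          · rw [hv]
            congr 1
            omega
          · omega
          · omega
          · rfl
        · rw [if_neg c2, if_neg c2]; rfl
    rw [← lhs] at core
    rw [show ((((z : ℕ) : ℤ) - ((0 : ℕ) : ℤ))) = (z : ℤ) by simp]
    have core' := congrArg (fun x : ℤ => (x : ℚ)) core
    simp only [Int.cast_natCast] at core'
    rw [core']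
    push_cast
    simp only [sub_sub]
  · have hra : ¬ r ∣ r * (2 * a) - d ∨ r * (2 * a) ≤ d := by
      by_cases h : r * (2 * a) ≤ d
      · exact Or.inr h
      · left
        intro h2
        apply hrd
        exact (Nat.dvd_sub_iff_right (by omega) (Dvd.intro _ rfl)).1 h2
    have hU : ∀ e, PowerSeries.coeff d ((PowerSeries.X : PowerSeries ℚ) ^ (r * e) * US r) = 0 := fun e =>
      cz (fun n hn => by simp [hn]) e d hrd
    have hP : ∀ e, PowerSeries.coeff d ((PowerSeries.X : PowerSeries ℚ) ^ (r * e) * PowerSeries.mk fun n => (p n : ℚ)) = 0 := fun e =>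
      cz (fun n hn => by simp [h0 n hn]) e d hrd
    have hX : PowerSeries.coeff d ((PowerSeries.X : PowerSeries ℚ) ^ (r * (2 * a))) = 0 := by
      rw [PowerSeries.coeff_X_pow, if_neg (by rintro rfl; exact hrd (Dvd.intro _ rfl))]
    simp only [hU, hP, hX]
    have : (if d ≤ r * a then p d else if d ≤ r * (2 * a) then
      (if r ∣ r * (2 * a) - d then 1 else 0) +
      (if 2 * r ≤ r * (2 * a) - d then p (r * (2 * a) - d - 2 * r) else 0) else 0 : ℕ) = 0 := by
      split_ifs with c1 c2 c3 c4 c4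
      · exact h0 d hrd
      · rcases hra with h | h
        · exact absurd c3 h
        · have : d = r * (2 * a) := by omega
          exact absurd (this ▸ Dvd.intro _ rfl) hrd
      · rcases hra with h | h
        · exact absurd c3 h
        · have : d = r * (2 * a) := by omega
          exact absurd (this ▸ Dvd.intro _ rfl) hrd
      · rw [zero_add]
        apply h0
        intro h2
        have h3 := Nat.dvd_add h2 (Dvd.intro_left 2 rfl : r ∣ 2 * r)
        rw [Nat.sub_add_cancel c4] at h3
        rcases hra with h | h
        · exact h h3
        · have : d = r * (2 * a) := by omega
          exact absurd (this ▸ Dvd.intro _ rfl) hrd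
      · rfl
      · rfl
    rw [this]; simp

end Series


section Final

lemma Icc_one : Finset.Icc (0 : Fin 1 → ℕ) (fun _ => 2) = {![0], ![1], ![2]} := by decide
lemma Icc_two : Finset.Icc (0 : Fin 2 → ℕ) (fun _ => 1) = {![0, 0], ![1, 0], ![0, 1], ![1, 1]} := by decide

lemma Cser_one_zero (q : ℕ) : Cser q 0 1 (fun _ => 2) = 1 := by
  unfold Cser
  rw [Icc_one]
  have : ({![0], ![1], ![2]} : Finset (Fin 1 → ℕ)).filter (fun β => ∑ i, β i ≤ 0) = {![0]} := by decide
  rw [this, Finset.sum_singleton]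
  simp [eexp, qtMult, extfn, _root_.psum, Finset.sum_range_succ]

lemma Cser_two_zero (q : ℕ) : Cser q 0 2 (fun _ => 1) = 1 := by
  unfold Cser
  rw [Icc_two]
  have : ({![0, 0], ![1, 0], ![0, 1], ![1, 1]} : Finset (Fin 2 → ℕ)).filter (fun β => ∑ i, β i ≤ 0) = {![0, 0]} := by decide
  rw [this, Finset.sum_singleton]
  simp [eexp, qtMult, extfn, _root_.psum, Finset.sum_range_succ, Finset.prod_range_succ]

lemma Cser_one_succ (q m : ℕ) : Cser q (m + 1) 1 (fun _ => 2) =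
    (PowerSeries.X : PowerSeries ℚ) ^ (2 * (q ^ (m + 1) - 1)) +
      PowerSeries.X ^ (q ^ (m + 1) - q) * ((1 - PowerSeries.X ^ (q ^ (m + 1) - 1)) * (1 - PowerSeries.X ^ (q - 1))⁻¹) +
      (1 - PowerSeries.X ^ (q ^ (m + 1) - 1)) * (1 - PowerSeries.X ^ (q ^ (m + 1) - q)) *
        ((1 - PowerSeries.X ^ (q ^ 2 - 1))⁻¹ * (1 - PowerSeries.X ^ (q ^ 2 - q))⁻¹) := by
  unfold Cser
  rw [Icc_one, Finset.sum_filter, Finset.sum_insert (by decide), Finset.sum_insert (by decide), Finset.sum_singleton]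
  rcases m with _ | m
  · simp [eexp, qtMult, extfn, _root_.psum, Finset.sum_range_succ, Finset.prod_range_succ]
  · simp [eexp, qtMult, extfn, _root_.psum, Finset.sum_range_succ, Finset.prod_range_succ]
    ring

lemma Cser_two_succ (q m : ℕ) : Cser q (m + 1) 2 (fun _ => 1) =
    (PowerSeries.X : PowerSeries ℚ) ^ (2 * (q ^ (m + 1) - 1)) +
      PowerSeries.X ^ (q ^ (m + 1) - q) * ((1 - PowerSeries.X ^ (q ^ (m + 1) - 1)) * (1 - PowerSeries.X ^ (q - 1))⁻¹) +
      PowerSeries.X ^ (q ^ (m + 1) - 1) * ((1 - PowerSeries.X ^ (q ^ (m + 1) - 1)) * (1 - PowerSeries.X ^ (q - 1))⁻¹) +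
      (1 - PowerSeries.X ^ (q ^ (m + 1) - 1)) * (1 - PowerSeries.X ^ (q ^ (m + 1) - q)) *
        ((1 - PowerSeries.X ^ (q - 1))⁻¹ * (1 - PowerSeries.X ^ (q ^ 2 - q))⁻¹) := by
  unfold Cser
  rw [Icc_two, Finset.sum_filter, Finset.sum_insert (by decide), Finset.sum_insert (by decide), Finset.sum_insert (by decide), Finset.sum_singleton]
  rcases m with _ | m
  · simp [eexp, qtMult, extfn, _root_.psum, Finset.sum_range_succ, Finset.prod_range_succ]
    ring
  · simp [eexp, qtMult, extfn, _root_.psum, Finset.sum_range_succ, Finset.prod_range_succ]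
    ring

variable {F : Type} [Field F] [Fintype F]

lemma hilb_zero (H : Subgroup (GL (Fin 2) F)) (h1 : Module.finrank F (PInv H 0) = 1) :
    (PowerSeries.mk fun d => (Module.finrank F (Submodule.map (frobPow F 2 (Fintype.card F ^ 0)).mkQ
      (fixDeg F 2 (Fintype.card F ^ 0) (H : Set (GL (Fin 2) F)) d)) : ℚ)) = 1 := by
  ext d
  rw [PowerSeries.coeff_mk, PowerSeries.coeff_one]
  by_cases hd : d = 0
  · subst hd
    rw [red_low (by simp), h1]; simp
  · rw [red_top (by rw [pow_zero]; omega), if_neg hd]; simp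

lemma main_G (r m : ℕ) (hr : Fintype.card F = r + 1) :
    (PowerSeries.mk fun d => (Module.finrank F (Submodule.map (frobPow F 2 (Fintype.card F ^ (m + 1))).mkQ
      (fixDeg F 2 (Fintype.card F ^ (m + 1)) ((⊤ : Subgroup (GL (Fin 2) F)) : Set (GL (Fin 2) F)) d)) : ℚ)) =
    Cser (Fintype.card F) (m + 1) 1 (fun _ => 2) := by
  have hr0 : 0 < r := by have := card_gt (F := F); omega
  have hN := GS_pow r (m + 1)
  have ha : GS (r + 1) (m + 1) = 1 + (r + 1) * GS (r + 1) m := rfl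
  have hp : ∀ n, Module.finrank F (PInv (⊤ : Subgroup (GL (Fin 2) F)) n) =
      (if (r + 1) * r ∣ n then 1 else 0) + if (r + 1 + 1) * r ≤ n then
        Module.finrank F (PInv (⊤ : Subgroup (GL (Fin 2) F)) (n - (r + 1 + 1) * r)) else 0 := by
    intro n
    have := PInvG_rec (F := F) n
    rw [hr] at this
    simpa using this
  have S := serG hr0 ha (GS_dvd (r + 1) m).symm hp
  rw [Cser_one_succ, hr]
  have e1 : (r + 1) ^ (m + 1) - 1 = r * GS (r + 1) (m + 1) := by omega
  have e2 : (r + 1) ^ (m + 1) - (r + 1) = r * ((r + 1) * GS (r + 1) m) := by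
    rw [hN, ha, Nat.mul_add]; omega
  have e3 : 2 * (r * GS (r + 1) (m + 1)) = r * (2 * GS (r + 1) (m + 1)) := by ring
  have e4 : (r + 1) ^ 2 - 1 = (r + 1 + 1) * r := by
    rw [show (r + 1) ^ 2 = (r + 1 + 1) * r + 1 by ring]; omega
  have e5 : (r + 1) ^ 2 - (r + 1) = (r + 1) * r := by
    rw [show (r + 1) ^ 2 = (r + 1) * r + (r + 1) by ring]; omega
  rw [e1, e2, e3, e4, e5, Nat.add_sub_cancel, ← S]
  congr 1
  funext d
  congr 1
  have e6 : 2 * (r + 1) ^ (m + 1) - 2 = r * (2 * GS (r + 1) (m + 1)) := by omega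
  by_cases c1 : d ≤ r * GS (r + 1) (m + 1)
  · rw [if_pos c1]
    exact red_low (by omega)
  rw [if_neg c1]
  by_cases c2 : d ≤ r * (2 * GS (r + 1) (m + 1))
  · rw [if_pos c2]
    have h1 := red_mid (F := F) (m := m + 1) (d := d) (H := ⊤) (by rw [hr]; omega) (by rw [hr]; omega)
    rw [hr, e6, DInvG_rec, KInvG, hr, Nat.add_sub_cancel] at h1
    exact h1
  · rw [if_neg c2]
    exact red_top (by omega)

lemma main_B (r m : ℕ) (hr : Fintype.card F = r + 1) :
    (PowerSeries.mk fun d => (Module.finrank F (Submodule.map (frobPow F 2 (Fintype.card F ^ (m + 1))).mkQ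
      (fixDeg F 2 (Fintype.card F ^ (m + 1)) ((BB F : Subgroup (GL (Fin 2) F)) : Set (GL (Fin 2) F)) d)) : ℚ)) =
    Cser (Fintype.card F) (m + 1) 2 (fun _ => 1) := by
  have hr0 : 0 < r := by have := card_gt (F := F); omega
  have hN := GS_pow r (m + 1)
  have ha : GS (r + 1) (m + 1) = 1 + (r + 1) * GS (r + 1) m := rfl
  have hp : ∀ n, Module.finrank F (PInv (BB F) n) =
      (if (r + 1) * r ∣ n then 1 else 0) + if 1 * r ≤ n then
        Module.finrank F (PInv (BB F) (n - 1 * r)) else 0 := by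
    intro n
    have := PInvB_rec (F := F) n
    rw [hr] at this
    rw [one_mul]
    exact this
  have S := serB hr0 ha hp
  rw [Cser_two_succ, hr]
  have e1 : (r + 1) ^ (m + 1) - 1 = r * GS (r + 1) (m + 1) := by omega
  have e2 : (r + 1) ^ (m + 1) - (r + 1) = r * ((r + 1) * GS (r + 1) m) := by
    rw [hN, ha, Nat.mul_add]; omega
  have e3 : 2 * (r * GS (r + 1) (m + 1)) = r * (2 * GS (r + 1) (m + 1)) := by ring
  have e5 : (r + 1) ^ 2 - (r + 1) = (r + 1) * r := by
    rw [show (r + 1) ^ 2 = (r + 1) * r + (r + 1) by ring]; omega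
  rw [one_mul] at S
  rw [e1, e2, e3, e5, Nat.add_sub_cancel, ← S]
  congr 1
  funext d
  congr 1
  have e6 : 2 * (r + 1) ^ (m + 1) - 2 = r * (2 * GS (r + 1) (m + 1)) := by omega
  by_cases c1 : d ≤ r * GS (r + 1) (m + 1)
  · rw [if_pos c1]
    exact red_low (by omega)
  rw [if_neg c1]
  by_cases c2 : d ≤ r * (2 * GS (r + 1) (m + 1))
  · rw [if_pos c2]
    have h1 := red_mid (F := F) (m := m + 1) (d := d) (H := BB F) (by rw [hr]; omega) (by rw [hr]; omega)
    rw [hr, e6, DInvB_rec, KInvB, hr, Nat.add_sub_cancel] at h1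
    exact h1
  · rw [if_neg c2]
    exact red_top (by omega)

end Final

/-- Theorem (the bivariate case of the main conjecture): for `Q = F_q[x,y]/(x^{q^m},y^{q^m})`
and for both compositions `α = (2)` and `α = (1,1)` of `n = 2` (so `P_{(2)} = GL_2(F_q)` and
`P_{(1,1)}` is the Borel subgroup), one has `Hilb(Q^{P_α},t) = C_{α,m}(t)`. -/
theorem statement19 (q m : ℕ) (hq : IsPrimePow q) (Fq : Type) [Field Fq] [Fintype Fq]
    (hcard : Fintype.card Fq = q) :
    ((PowerSeries.mk fun d =>
        (Module.finrank Fq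
          (Submodule.map (frobPow Fq 2 (q ^ m)).mkQ
            (fixDeg Fq 2 (q ^ m) (Pa Fq 2 1 fun _ => 2) d)) : ℚ))
      = Cser q m 1 fun _ => 2) ∧
    ((PowerSeries.mk fun d =>
        (Module.finrank Fq
          (Submodule.map (frobPow Fq 2 (q ^ m)).mkQ
            (fixDeg Fq 2 (q ^ m) (Pa Fq 2 2 fun _ => 1) d)) : ℚ))
      = Cser q m 2 fun _ => 1) := by
  subst hcard
  have hc := card_gt (F := Fq)
  rw [Pa_two, Pa_oneone]
  rcases m with _ | m
  · rw [Cser_one_zero, Cser_two_zero]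
    constructor
    · apply hilb_zero
      rw [PInvG_rec, if_pos (dvd_zero _), if_neg]
      have : 0 < (Fintype.card Fq + 1) * (Fintype.card Fq - 1) := Nat.mul_pos (by omega) (by omega)
      omega
    · apply hilb_zero
      rw [PInvB_rec, if_pos (dvd_zero _), if_neg (by omega)]
  · exact ⟨main_G (Fintype.card Fq - 1) m (by omega), main_B (Fintype.card Fq - 1) m (by omega)⟩
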